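/- arXiv:1109.2924 — 3 statements merged into one kernel-verified Lean document; each statement's English description precedes it below -/
import Mathlib

section
/- Let H0 and H be finite hearts of bounded t-structures on a triangulated category D and let N ≥ 2 be an integer. Then H0[1] ≤ H ≤ H0[N-1] if and only if, for every simple object S of H, the homology H^m(S) with respect to H0 vanishes for all integers m with m ≤ 0 or m ≥ N. -/
open CategoryTheory Category Limits Pretriangulated ZeroObject

universe v u

namespace Paper

variable (C : Type u) [Category.{v} C] [HasZeroObject C] [HasShift C ℤ]
  [Preadditive C] [∀ n : ℤ, (shiftFunctor C n).Additive] [Pretriangulated C]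

/-- The right perpendicular of a set of objects: objects receiving no nonzero
morphism from the set. -/
def perp (P : Set C) : Set C := {G | ∀ F ∈ P, ∀ f : F ⟶ G, f = 0}

/-- A bounded t-structure on a (pre)triangulated category, given by its aisle `P`. -/
structure TStr where
  P : Set C
  /-- `P` is closed under direct summands (hence under isomorphism). -/
  summand : ∀ (X Y : C) (i : Y ⟶ X) (r : X ⟶ Y), i ≫ r = 𝟙 Y → X ∈ P → Y ∈ P
  /-- `P[1] ⊆ P`. -/
  shift_mem : ∀ X ∈ P, X⟦(1 : ℤ)⟧ ∈ P
  /-- Every object fits in a triangle `F → E → G → F[1]` with `F ∈ P` and `G ∈ P^⊥`. -/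
  exists_triangle : ∀ E : C, ∃ (F G : C) (f : F ⟶ E) (g : E ⟶ G) (h : G ⟶ F⟦(1 : ℤ)⟧),
    F ∈ P ∧ G ∈ perp C P ∧ Triangle.mk f g h ∈ distTriang C
  /-- `M[k] ∈ P` for `k ≫ 0`. -/
  bounded_above : ∀ M : C, ∃ a : ℤ, ∀ j : ℤ, a ≤ j → M⟦j⟧ ∈ P
  /-- `M[k] ∈ P^⊥` for `k ≪ 0`. -/
  bounded_below : ∀ M : C, ∃ b : ℤ, ∀ j : ℤ, j ≤ b → M⟦j⟧ ∈ perp C P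

/-- The heart `H = P^⊥[1] ∩ P` of a bounded t-structure. -/
def heart (T : TStr C) : Set C := {X | X ∈ T.P ∧ X⟦(-1 : ℤ)⟧ ∈ perp C T.P}

/-- The shift `S[m]` of a set of objects. -/
def shiftSet (S : Set C) (m : ℤ) : Set C := {X | X⟦(-m : ℤ)⟧ ∈ S}

/-- An object `P` is a projective of a heart if `Hom(P, M[k]) = 0` for all `k ≠ 0`
and all `M` in the heart. -/
def IsProjOf (T : TStr C) (P : C) : Prop :=
  ∀ (k : ℤ), k ≠ 0 → ∀ M ∈ heart C T, ∀ f : P ⟶ M⟦k⟧, f = 0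

/-- A filtration of an object `M` by triangles with factors in the heart, shifted by a
strictly decreasing sequence of degrees: the canonical filtration associated to a bounded
t-structure. -/
structure HeartFiltration (T : TStr C) (M : C) where
  n : ℕ
  obj : ℕ → C
  deg : ℕ → ℤ
  factor : ℕ → C
  zero : IsZero (obj 0)
  top : obj n ≅ M
  mem : ∀ i, 1 ≤ i → i ≤ n → factor i ∈ heart C T
  strict : ∀ i j, 1 ≤ i → i < j → j ≤ n → deg j < deg i
  tri : ∀ i, 1 ≤ i → i ≤ n →
    ∃ (f : obj (i - 1) ⟶ obj i) (g : obj i ⟶ (factor i)⟦deg i⟧)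
      (h : (factor i)⟦deg i⟧ ⟶ (obj (i - 1))⟦(1 : ℤ)⟧),
      Triangle.mk f g h ∈ distTriang C

variable {C}

open Classical in
/-- The homology `H^k(M)` of `M` with respect to the heart, read off from a
filtration: the factor in degree `k` if there is one, and `0` otherwise. -/
noncomputable def HeartFiltration.homologyAt {T : TStr C} {M : C}
    (F : HeartFiltration C T M) (k : ℤ) : C :=
  if h : ∃ i, 1 ≤ i ∧ i ≤ F.n ∧ F.deg i = k then F.factor h.choose else 0

variable (C)

/-- A torsion pair `⟨F, T⟩` in the heart of a bounded t-structure: `Hom(T, F) = 0` and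
every object of the heart is an extension (triangle) of an `F`-object by a `T`-object. -/
structure TorsionPairIn (T : TStr C) where
  free : Set C
  tor : Set C
  free_sub : free ⊆ heart C T
  tor_sub : tor ⊆ heart C T
  hom_zero : ∀ X ∈ tor, ∀ Y ∈ free, ∀ f : X ⟶ Y, f = 0
  exists_ses : ∀ E ∈ heart C T, ∃ (A B : C) (f : A ⟶ E) (g : E ⟶ B) (h : B ⟶ A⟦(1 : ℤ)⟧),
    A ∈ tor ∧ B ∈ free ∧ Triangle.mk f g h ∈ distTriang C

/-- The forward tilt `H^♯` of the heart at a torsion pair `⟨free, tor⟩`: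
objects `E` with `H^1(E) ∈ F`, `H^0(E) ∈ T` and `H^i(E) = 0` otherwise. -/
def tiltSharpSet (T : TStr C) (free tor : Set C) : Set C :=
  {E | ∀ (F : HeartFiltration C T E) (i : ℕ), 1 ≤ i → i ≤ F.n →
    IsZero (F.factor i) ∨ (F.deg i = 1 ∧ F.factor i ∈ free) ∨
      (F.deg i = 0 ∧ F.factor i ∈ tor)}

/-- The backward tilt `H^♭` of the heart at a torsion pair `⟨free, tor⟩`:
objects `E` with `H^0(E) ∈ F`, `H^{-1}(E) ∈ T` and `H^i(E) = 0` otherwise. -/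
def tiltFlatSet (T : TStr C) (free tor : Set C) : Set C :=
  {E | ∀ (F : HeartFiltration C T E) (i : ℕ), 1 ≤ i → i ≤ F.n →
    IsZero (F.factor i) ∨ (F.deg i = 0 ∧ F.factor i ∈ free) ∨
      (F.deg i = -1 ∧ F.factor i ∈ tor)}

/-- Simple objects of a heart (or of any full subcategory closed under the abelian
structure): nonzero objects which are not the middle term of a nontrivial short exact
sequence (triangle) in the heart. -/
def IsSimpleIn (H : Set C) (X : C) : Prop :=
  X ∈ H ∧ ¬ IsZero X ∧ ∀ (A B : C) (f : A ⟶ X) (g : X ⟶ B) (h : B ⟶ A⟦(1 : ℤ)⟧),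
    A ∈ H → B ∈ H → Triangle.mk f g h ∈ (distTriang C) → IsZero A ∨ IsZero B

/-- A heart is finite if it has finitely many simples up to isomorphism and every object
is a finite iterated extension of simple objects. -/
def FiniteHeart (T : TStr C) : Prop :=
  (∃ (n : ℕ) (S : Fin n → C), (∀ i, IsSimpleIn C (heart C T) (S i)) ∧
    ∀ X, IsSimpleIn C (heart C T) X → ∃ i, Nonempty (X ≅ S i)) ∧
  ∀ M ∈ heart C T, ∃ (m : ℕ) (obj : ℕ → C), IsZero (obj 0) ∧ Nonempty (obj m ≅ M) ∧
    ∀ i < m, ∃ (s : C) (f : obj i ⟶ obj (i + 1)) (g : obj (i + 1) ⟶ s)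
      (h : s ⟶ (obj i)⟦(1 : ℤ)⟧),
      IsSimpleIn C (heart C T) s ∧ Triangle.mk f g h ∈ distTriang C

section Biproducts

variable [HasFiniteBiproducts C]

/-- Finite direct sums of copies of an object `S`. -/
def addObj (S : C) : Set C := {M | ∃ n : ℕ, Nonempty (M ≅ ⨁ (fun _ : Fin n => S))}

/-- The simple forward tilt `H^♯_S` of the heart at a rigid simple `S`: the forward tilt
at the torsion pair whose free part consists of finite direct sums of copies of `S`. -/
def simpleSharpSet (T : TStr C) (S : C) : Set C :=
  tiltSharpSet C T (addObj C S) {M | M ∈ heart C T ∧ ∀ f : M ⟶ S, f = 0}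

/-- The simple backward tilt `H^♭_S` of the heart at a rigid simple `S`: the backward
tilt at the torsion pair whose torsion part consists of finite direct sums of copies
of `S`. -/
def simpleFlatSet (T : TStr C) (S : C) : Set C :=
  tiltFlatSet C T {M | M ∈ heart C T ∧ ∀ f : S ⟶ M, f = 0} (addObj C S)

end Biproducts

section Helpers

open Triangulated

variable {C}

lemma TStr.mem_of_iso (T : TStr C) {X Y : C} (e : X ≅ Y) (hX : X ∈ T.P) : Y ∈ T.P :=
  T.summand X Y e.inv e.hom e.inv_hom_id hX

lemma TStr.mem_perp_of_iso (T : TStr C) {X Y : C} (e : X ≅ Y) (hX : X ∈ perp C T.P) :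
    Y ∈ perp C T.P := by
  intro F hF f
  rw [← cancel_mono e.inv, zero_comp]
  exact hX F hF _

/-- The Mathlib t-structure with aisle `T.P`; its objects `≤ n` are those of `P[-n]`. -/
def TStr.toTStructure (T : TStr C) : TStructure C where
  le n := fun X => X⟦n⟧ ∈ T.P
  ge n := fun X => X⟦n - 1⟧ ∈ perp C T.P
  le_isClosedUnderIsomorphisms n :=
    ⟨fun e h => T.mem_of_iso ((shiftFunctor C n).mapIso e) h⟩
  ge_isClosedUnderIsomorphisms n :=
    ⟨fun e h => T.mem_perp_of_iso ((shiftFunctor C (n - 1)).mapIso e) h⟩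
  le_shift n a n' h X hX := T.mem_of_iso ((shiftFunctorAdd' C a n' n h).app X) hX
  ge_shift n a n' h X hX :=
    T.mem_perp_of_iso ((shiftFunctorAdd' C a (n' - 1) (n - 1) (by lia)).app X) hX
  zero' X Y f hX hY :=
    T.mem_perp_of_iso ((shiftFunctorZero' C (1 - 1 : ℤ) (by lia)).app Y) hY X
      (T.mem_of_iso ((shiftFunctorZero C ℤ).app X) hX) f
  le_zero_le X hX :=
    T.mem_of_iso ((shiftFunctorAdd' C (0 : ℤ) 1 1 (by lia)).symm.app X) (T.shift_mem _ hX)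
  ge_one_le X hX := by
    intro F hF f
    apply (shiftFunctor C (1 : ℤ)).map_injective
    rw [Functor.map_zero]
    exact T.mem_perp_of_iso ((shiftFunctorAdd' C (0 - 1 : ℤ) 1 (1 - 1) (by lia)).app X) hX _
      (T.shift_mem F hF) _
  exists_triangle_zero_one A := by
    obtain ⟨F, G, f, g, h, hF, hG, hT⟩ := T.exists_triangle A
    exact ⟨F, G, T.mem_of_iso ((shiftFunctorZero C ℤ).symm.app F) hF,
      T.mem_perp_of_iso ((shiftFunctorZero' C (1 - 1 : ℤ) (by lia)).symm.app G) hG, f, g, h, hT⟩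

lemma TStr.shift_mem_iff (T : TStr C) (X : C) (n : ℤ) :
    X⟦n⟧ ∈ T.P ↔ T.toTStructure.IsLE X n :=
  T.toTStructure.le_iff_isLE X n

lemma TStr.shift_mem_perp_iff (T : TStr C) (X : C) (m n : ℤ) (h : m + 1 = n) :
    X⟦m⟧ ∈ perp C T.P ↔ T.toTStructure.IsGE X n := by
  obtain rfl : m = n - 1 := by lia
  exact T.toTStructure.ge_iff_isGE X n

lemma TStr.mem_iff (T : TStr C) (X : C) : X ∈ T.P ↔ T.toTStructure.IsLE X 0 := by
  rw [← T.shift_mem_iff]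
  exact ⟨T.mem_of_iso ((shiftFunctorZero C ℤ).symm.app X),
    T.mem_of_iso ((shiftFunctorZero C ℤ).app X)⟩

lemma mem_heart_iff (T : TStr C) (X : C) :
    X ∈ heart C T ↔ T.toTStructure.IsLE X 0 ∧ T.toTStructure.IsGE X 0 := by
  rw [← T.mem_iff, ← T.shift_mem_perp_iff X (-1) 0 (by lia)]
  rfl

lemma TStr.exists_isLE (T : TStr C) (X : C) : ∃ a, T.toTStructure.IsLE X a := by
  obtain ⟨a, ha⟩ := T.bounded_above X
  exact ⟨a, (T.shift_mem_iff X a).1 (ha a le_rfl)⟩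

lemma TStr.exists_isGE (T : TStr C) (X : C) : ∃ b, T.toTStructure.IsGE X b := by
  obtain ⟨b, hb⟩ := T.bounded_below X
  exact ⟨b + 1, (T.shift_mem_perp_iff X b _ rfl).1 (hb b le_rfl)⟩

/-- A property stable under extensions passes to the last term of a sequence of extensions. -/
lemma prop_of_extensions {Q : ObjectProperty C}
    (hQ : ∀ T ∈ distTriang C, Q T.obj₁ → Q T.obj₃ → Q T.obj₂) (obj : ℕ → C) (h0 : Q (obj 0))
    (n : ℕ)
    (tri : ∀ i < n, ∃ (s : C) (f : obj i ⟶ obj (i + 1)) (g : obj (i + 1) ⟶ s)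
      (h : s ⟶ (obj i)⟦(1 : ℤ)⟧), Q s ∧ Triangle.mk f g h ∈ distTriang C) :
    Q (obj n) := by
  induction n with
  | zero => exact h0
  | succ n ih =>
    obtain ⟨s, f, g, h, hs, hT⟩ := tri n n.lt_succ_self
    exact hQ _ hT (ih fun i hi => tri i (hi.trans n.lt_succ_self)) hs

namespace HeartFiltration

variable {T : TStr C} {M : C} (F : HeartFiltration C T M)

lemma prop_obj {Q : ObjectProperty C}
    (hQ : ∀ T ∈ distTriang C, Q T.obj₁ → Q T.obj₃ → Q T.obj₂) (hzero : ∀ X, IsZero X → Q X)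
    (k : ℕ) (hk : k ≤ F.n) (hfac : ∀ i, 1 ≤ i → i ≤ k → Q ((F.factor i)⟦F.deg i⟧)) :
    Q (F.obj k) := by
  refine prop_of_extensions hQ F.obj (hzero _ F.zero) k fun i hi => ?_
  obtain ⟨f, g, h, hT⟩ := F.tri (i + 1) (by lia) (by lia)
  exact ⟨_, f, g, h, hfac _ (by lia) (by lia), hT⟩

lemma isLE_obj (t : TStructure C) (m : ℤ) (k : ℕ) (hk : k ≤ F.n)
    (hfac : ∀ i, 1 ≤ i → i ≤ k → t.IsLE ((F.factor i)⟦F.deg i⟧) m) : t.IsLE (F.obj k) m :=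
  F.prop_obj (Q := fun X => t.IsLE X m) (fun T hT => t.isLE₂ T hT m)
    (fun _ hX => t.isLE_of_isZero hX m) k hk hfac

lemma isGE_obj (t : TStructure C) (m : ℤ) (k : ℕ) (hk : k ≤ F.n)
    (hfac : ∀ i, 1 ≤ i → i ≤ k → t.IsGE ((F.factor i)⟦F.deg i⟧) m) : t.IsGE (F.obj k) m :=
  F.prop_obj (Q := fun X => t.IsGE X m) (fun T hT => t.isGE₂ T hT m)
    (fun _ hX => t.isGE_of_isZero hX m) k hk hfac

lemma isLE (t : TStructure C) (m : ℤ)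
    (hfac : ∀ i, 1 ≤ i → i ≤ F.n → t.IsLE ((F.factor i)⟦F.deg i⟧) m) : t.IsLE M m :=
  have := F.isLE_obj t m F.n le_rfl hfac
  t.isLE_of_iso F.top m

lemma isGE (t : TStructure C) (m : ℤ)
    (hfac : ∀ i, 1 ≤ i → i ≤ F.n → t.IsGE ((F.factor i)⟦F.deg i⟧) m) : t.IsGE M m :=
  have := F.isGE_obj t m F.n le_rfl hfac
  t.isGE_of_iso F.top m

lemma factor_isLE {i : ℕ} (h1 : 1 ≤ i) (hi : i ≤ F.n) :
    T.toTStructure.IsLE ((F.factor i)⟦F.deg i⟧) (-F.deg i) :=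
  have := ((mem_heart_iff T _).1 (F.mem i h1 hi)).1
  T.toTStructure.isLE_shift _ 0 _ _

lemma factor_isGE {i : ℕ} (h1 : 1 ≤ i) (hi : i ≤ F.n) :
    T.toTStructure.IsGE ((F.factor i)⟦F.deg i⟧) (-F.deg i) :=
  have := ((mem_heart_iff T _).1 (F.mem i h1 hi)).2
  T.toTStructure.isGE_shift _ 0 _ _

/-- Terms of the filtration before the `i`-th one lie strictly above degree `deg i`. -/
lemma isLE_obj_pred {i : ℕ} (h1 : 1 ≤ i) (hi : i ≤ F.n) :
    T.toTStructure.IsLE (F.obj (i - 1)) (-F.deg i - 1) :=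
  F.isLE_obj _ _ _ (by lia) fun j hj hji =>
    have := F.factor_isLE hj (by lia)
    have := F.strict j i hj (by lia) hi
    T.toTStructure.isLE_of_le _ (-F.deg j) _

lemma isLE_obj_self {i : ℕ} (h1 : 1 ≤ i) (hi : i ≤ F.n) :
    T.toTStructure.IsLE (F.obj i) (-F.deg i) := by
  obtain ⟨f, g, h, hT⟩ := F.tri i h1 hi
  have := F.isLE_obj_pred h1 hi
  exact T.toTStructure.isLE₂ _ hT _
    (T.toTStructure.isLE_of_le (F.obj (i - 1)) (-F.deg i - 1) _) (F.factor_isLE h1 hi)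

/-- A factor which receives no nonzero map from its term of the filtration is zero. -/
lemma isZero_factor_of_hom_eq_zero {i : ℕ} (h1 : 1 ≤ i) (hi : i ≤ F.n)
    (hg : ∀ g : F.obj i ⟶ (F.factor i)⟦F.deg i⟧, g = 0) :
    IsZero ((F.factor i)⟦F.deg i⟧) := by
  obtain ⟨f, g, h, hT⟩ := F.tri i h1 hi
  have := F.isLE_obj_pred h1 hi
  have := T.toTStructure.isLE_shift (F.obj (i - 1)) (-F.deg i - 1) 1 (-F.deg i - 2)
  have := F.factor_isGE h1 hi
  obtain ⟨r, hr⟩ : ∃ r : (F.obj (i - 1))⟦(1 : ℤ)⟧ ⟶ (F.factor i)⟦F.deg i⟧, 𝟙 _ = h ≫ r :=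
    Triangle.yoneda_exact₃ _ hT (𝟙 _) (hg _)
  rw [IsZero.iff_id_eq_zero, hr, T.toTStructure.zero r (-F.deg i - 2) (-F.deg i), comp_zero]

lemma isZero_factor_of_shift {i : ℕ} (h : IsZero ((F.factor i)⟦F.deg i⟧)) :
    IsZero (F.factor i) :=
  ((shiftFunctor C (-F.deg i)).map_isZero h).of_iso
    ((shiftEquiv C (F.deg i)).unitIso.app (F.factor i))

/-- If `M` is `≤ m`, then the factors in degrees below `-m` vanish. -/
lemma isZero_factor_of_isLE (m : ℤ) (hM : T.toTStructure.IsLE M m) {i : ℕ} (h1 : 1 ≤ i)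
    (hi : i ≤ F.n) (hdeg : F.deg i < -m) : IsZero (F.factor i) := by
  have key : ∀ j, j ≤ F.n → i ≤ j → T.toTStructure.IsLE (F.obj j) m := by
    intro j hj
    induction hj using Nat.decreasingInduction with
    | self => exact fun _ => T.toTStructure.isLE_of_iso F.top.symm m
    | of_succ k hk ih =>
      intro hik
      have := ih (by lia)
      have := F.factor_isGE (i := k + 1) (by lia) hk
      have := F.strict i (k + 1) h1 (by lia) hk
      have hz := F.isZero_factor_of_hom_eq_zero (i := k + 1) (by lia) hk
        fun g => T.toTStructure.zero g m (-F.deg (k + 1))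
      obtain ⟨f, g, h, hT⟩ := F.tri (k + 1) (by lia) hk
      have : IsIso f := (Triangle.isZero₃_iff_isIso₁ _ hT).1 hz
      exact T.toTStructure.isLE_of_iso (asIso f).symm m
  have := key i hi le_rfl
  have := F.factor_isGE h1 hi
  exact F.isZero_factor_of_shift (F.isZero_factor_of_hom_eq_zero h1 hi
    fun g => T.toTStructure.zero g m (-F.deg i))

/-- If `M` is `≥ m`, then the factors in degrees above `-m` vanish. -/
lemma isZero_factor_of_isGE (m : ℤ) (hM : T.toTStructure.IsGE M m) {i : ℕ} (h1 : 1 ≤ i)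
    (hi : i ≤ F.n) (hdeg : -m < F.deg i) : IsZero (F.factor i) := by
  have key : ∀ j, j ≤ F.n → T.toTStructure.IsGE (F.obj j) m := by
    intro j hj
    induction hj using Nat.decreasingInduction with
    | self => exact T.toTStructure.isGE_of_iso F.top.symm m
    | of_succ k hk ih =>
      have hfac := F.factor_isGE (i := k + 1) (by lia) hk
      obtain ⟨f, g, h, hT⟩ := F.tri (k + 1) (by lia) hk
      by_cases hd : F.deg (k + 1) ≤ -m
      · have := T.toTStructure.isGE_shift ((F.factor (k + 1))⟦F.deg (k + 1)⟧)
          (-F.deg (k + 1)) (-1) (-F.deg (k + 1) + 1)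
        have := T.toTStructure.isGE_of_ge ((F.factor (k + 1))⟦F.deg (k + 1)⟧⟦(-1 : ℤ)⟧) m
          (-F.deg (k + 1) + 1)
        exact T.toTStructure.isGE₂ _ (inv_rot_of_distTriang _ hT) m this ih
      · have := F.isLE_obj_self (i := k + 1) (by lia) hk
        have hz : IsZero (F.obj (k + 1)) :=
          T.toTStructure.isZero _ (-F.deg (k + 1)) m
        have hz' := F.isZero_factor_of_hom_eq_zero (i := k + 1) (by lia) hk
          fun g => hz.eq_of_src _ _
        exact T.toTStructure.isGE_of_isZero (Triangle.isZero₁_of_isZero₂₃ _ hT hz hz') m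
  have := key i hi
  have := F.isLE_obj_self h1 hi
  have hz : IsZero (F.obj i) := T.toTStructure.isZero _ (-F.deg i) m
  exact F.isZero_factor_of_shift (F.isZero_factor_of_hom_eq_zero h1 hi
    fun g => hz.eq_of_src _ _)

end HeartFiltration

/-- `X` is an extension of `B` by `A`: there is a distinguished triangle `A → X → B → A[1]`. -/
def IsExtension (A X B : C) : Prop :=
  ∃ (f : A ⟶ X) (g : X ⟶ B) (h : B ⟶ A⟦(1 : ℤ)⟧), Triangle.mk f g h ∈ distTriang C

lemma exists_filtration_terms (T : TStr C) (n : ℕ) (a : ℤ) (M : C)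
    (hle : T.toTStructure.IsLE M a) (hge : T.toTStructure.IsGE M (a - n + 1)) :
    ∃ obj factor : ℕ → C, IsZero (obj 0) ∧ obj n = M ∧
      ∀ i, 1 ≤ i → i ≤ n → factor i ∈ heart C T ∧
        IsExtension (obj (i - 1)) (obj i) ((factor i)⟦n - i - a⟧) := by
  induction n generalizing a M with
  | zero =>
    exact ⟨fun _ => M, fun _ => 0, T.toTStructure.isZero M a (a - (0 : ℕ) + 1), rfl,
      fun i h1 h2 => by lia⟩
  | succ n ih =>
    obtain ⟨X, Y, hX, hY, f, g, h, hT⟩ := T.toTStructure.exists_triangle M (a - 1) a (by lia)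
    rw [TStructure.le_iff_isLE] at hX
    rw [TStructure.ge_iff_isGE] at hY
    have hX1 := T.toTStructure.isLE_shift X (a - 1) 1 (a - 2)
    have hYle : T.toTStructure.IsLE Y a :=
      T.toTStructure.isLE₂ _ (rot_of_distTriang _ hT) a hle
        (T.toTStructure.isLE_of_le (X⟦(1 : ℤ)⟧) (a - 2) a)
    have hY1 := T.toTStructure.isGE_shift Y a (-1) (a + 1)
    have hXge : T.toTStructure.IsGE X (a - 1 - n + 1) :=
      T.toTStructure.isGE₂ _ (inv_rot_of_distTriang _ hT) _
        (T.toTStructure.isGE_of_ge (Y⟦(-1 : ℤ)⟧) _ (a + 1)) (by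
          rwa [show a - 1 - n + 1 = a - ((n + 1 : ℕ) : ℤ) + 1 by push_cast; ring])
    obtain ⟨obj, factor, h0, rfl, htri⟩ := ih (a - 1) X hX hXge
    refine ⟨fun i => if i = n + 1 then M else obj i,
      fun i => if i = n + 1 then Y⟦a⟧ else factor i, by simpa using h0, by simp, ?_⟩
    intro i h1 hi
    obtain rfl | hin := eq_or_ne i (n + 1)
    · have e : Y⟦a⟧⟦((n + 1 : ℕ) : ℤ) - (n + 1 : ℕ) - a⟧ ≅ Y :=
        ((shiftFunctorAdd' C a _ 0 (by lia)).symm ≪≫ shiftFunctorZero C ℤ).app Y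
      simp only [if_true, Nat.add_sub_cancel, n.lt_succ_self.ne, if_false]
      refine ⟨(mem_heart_iff T _).2 ⟨T.toTStructure.isLE_shift Y a a 0,
        T.toTStructure.isGE_shift Y a a 0⟩, f, g ≫ e.inv, e.hom ≫ h, ?_⟩
      exact isomorphic_distinguished _ hT _
        (Triangle.isoMk _ _ (Iso.refl _) (Iso.refl _) e
          ((comp_id f).trans (id_comp f).symm)
          ((assoc g e.inv e.hom).trans (by rw [e.inv_hom_id, comp_id]; exact (id_comp g).symm))
          ((congrArg _ ((shiftFunctor C (1 : ℤ)).map_id _)).trans (comp_id (e.hom ≫ h))))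
    · have hin' : i - 1 ≠ n + 1 := by lia
      simp only [hin, hin', if_false]
      rw [show ((n + 1 : ℕ) : ℤ) - i - a = n - i - (a - 1) by push_cast; ring]
      exact htri i h1 (by lia)

/-- An object which is `≤ a` and `≥ b` has a filtration with degrees in `[-a, -b]`. -/
lemma exists_heartFiltration (T : TStr C) (M : C) (a b : ℤ) (hab : b ≤ a + 1)
    (hle : T.toTStructure.IsLE M a) (hge : T.toTStructure.IsGE M b) :
    ∃ F : HeartFiltration C T M, ∀ i, 1 ≤ i → i ≤ F.n → -a ≤ F.deg i ∧ F.deg i ≤ -b := by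
  obtain ⟨n, hn⟩ := Int.nonneg_def.1 (sub_nonneg.2 hab)
  obtain rfl : b = a - n + 1 := by lia
  obtain ⟨obj, factor, h0, htop, htri⟩ := exists_filtration_terms T n a M hle hge
  exact ⟨{  n := n
            obj := obj
            deg := fun i => n - i - a
            factor := factor
            zero := h0
            top := eqToIso htop
            mem := fun i h1 hi => (htri i h1 hi).1
            strict := fun i j _ _ _ => by lia
            tri := fun i h1 hi => (htri i h1 hi).2 },
    fun i h1 hi => by dsimp only at hi ⊢; lia⟩

lemma prop_of_mem_heart {T : TStr C} (hfin : FiniteHeart C T) {Q : ObjectProperty C}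
    [Q.IsClosedUnderIsomorphisms]
    (hQ : ∀ T ∈ distTriang C, Q T.obj₁ → Q T.obj₃ → Q T.obj₂) (hzero : ∀ X, IsZero X → Q X)
    (hS : ∀ S, IsSimpleIn C (heart C T) S → Q S) {M : C} (hM : M ∈ heart C T) : Q M := by
  obtain ⟨m, obj, h0, ⟨e⟩, tri⟩ := hfin.2 M hM
  refine Q.prop_of_iso e (prop_of_extensions hQ obj (hzero _ h0) m fun i hi => ?_)
  obtain ⟨s, f, g, h, hs, hT⟩ := tri i hi
  exact ⟨s, f, g, h, hS s hs, hT⟩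

/-- An object whose homology is concentrated in degrees `[-a, -b]` is `≤ a` and `≥ b`. -/
lemma isLE_and_isGE_of_isZero_factor (T : TStr C) (M : C) (a b : ℤ)
    (hM : ∀ (F : HeartFiltration C T M) (i : ℕ), 1 ≤ i → i ≤ F.n →
      (F.deg i < -a ∨ -b < F.deg i) → IsZero (F.factor i)) :
    T.toTStructure.IsLE M a ∧ T.toTStructure.IsGE M b := by
  obtain ⟨p, hp⟩ := T.exists_isLE M
  obtain ⟨q, hq⟩ := T.exists_isGE M
  obtain ⟨F, -⟩ := exists_heartFiltration T M p (min q p) (by lia) hp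
    (T.toTStructure.isGE_of_ge M _ q)
  constructor
  · refine F.isLE _ _ fun i h1 hi => ?_
    by_cases hd : F.deg i < -a
    · exact T.toTStructure.isLE_of_isZero
        ((shiftFunctor C _).map_isZero (hM F i h1 hi (Or.inl hd))) _
    · have := F.factor_isLE h1 hi
      exact T.toTStructure.isLE_of_le _ (-F.deg i) _
  · refine F.isGE _ _ fun i h1 hi => ?_
    by_cases hd : -b < F.deg i
    · exact T.toTStructure.isGE_of_isZero
        ((shiftFunctor C _).map_isZero (hM F i h1 hi (Or.inr hd))) _
    · have := F.factor_isGE h1 hi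
      exact T.toTStructure.isGE_of_ge _ _ (-F.deg i)

end Helpers

/-- For finite hearts `H0` and `H` and `N ≥ 2`:
`H0[1] ≤ H ≤ H0[N-1]` if and only if for every simple `S` of `H` the homology of `S`
with respect to `H0` vanishes in all degrees `m ≤ 0` and `m ≥ N` (i.e. every factor of a
canonical filtration of `S` with respect to `H0` in such a degree is zero). -/
theorem statement_11 (T0 T : TStr C) (hfin0 : FiniteHeart C T0)
    (hfin : FiniteHeart C T) (N : ℤ) (hN : 2 ≤ N) :
    (T.P ⊆ shiftSet C T0.P 1 ∧ shiftSet C T0.P (N - 1) ⊆ T.P) ↔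
      ∀ S : C, IsSimpleIn C (heart C T) S →
        ∀ (F : HeartFiltration C T0 S) (i : ℕ), 1 ≤ i → i ≤ F.n →
          (F.deg i ≤ 0 ∨ N ≤ F.deg i) → IsZero (F.factor i) := by
  have hP : T.P ⊆ shiftSet C T0.P 1 ↔
      ∀ X, T.toTStructure.IsLE X 0 → T0.toTStructure.IsLE X (-1) :=
    forall_congr' fun X => imp_congr (T.mem_iff X) (T0.shift_mem_iff X (-1))
  have hP' : shiftSet C T0.P (N - 1) ⊆ T.P ↔
      ∀ X, T0.toTStructure.IsLE X (-(N - 1)) → T.toTStructure.IsLE X 0 :=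
    forall_congr' fun X => imp_congr (T0.shift_mem_iff X (-(N - 1))) (T.mem_iff X)
  rw [hP, hP']
  constructor
  · rintro ⟨h1, h2⟩ S ⟨hS, -, -⟩ F i hi hin hd
    obtain ⟨hle, hge⟩ := (mem_heart_iff T S).1 hS
    obtain hd | hd := hd
    · exact F.isZero_factor_of_isLE (-1) (h1 S hle) hi hin (by lia)
    · refine F.isZero_factor_of_isGE (-(N - 1)) ?_ hi hin (by lia)
      rw [T0.toTStructure.isGE_iff_orthogonal (-N) _ (by lia)]
      intro Y f hY
      have := h2 _ (T0.toTStructure.isLE_shift Y (-N) (-1) (-(N - 1)))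
      have := T.toTStructure.isLE_of_shift Y (-1) (-1) 0
      exact T.toTStructure.zero f (-1) 0
  · intro hsimple
    have hS : ∀ S, IsSimpleIn C (heart C T) S →
        T0.toTStructure.IsLE S (-1) ∧ T0.toTStructure.IsGE S (-(N - 1)) := fun S hS =>
      isLE_and_isGE_of_isZero_factor T0 S _ _ fun F i hi hin hd =>
        hsimple S hS F i hi hin (by lia)
    have hle : ∀ M ∈ heart C T, T0.toTStructure.IsLE M (-1) := fun M hM =>
      (T0.toTStructure.le_iff_isLE _ _).1 <|
        prop_of_mem_heart hfin (Q := T0.toTStructure.le (-1))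
          (by simpa using fun X hX => T0.toTStructure.isLE₂ X hX (-1))
          (by simpa using fun X hX => T0.toTStructure.isLE_of_isZero hX (-1))
          (by simpa using fun S h => (hS S h).1) hM
    have hge : ∀ M ∈ heart C T, T0.toTStructure.IsGE M (-(N - 1)) := fun M hM =>
      (T0.toTStructure.ge_iff_isGE _ _).1 <|
        prop_of_mem_heart hfin (Q := T0.toTStructure.ge (-(N - 1)))
          (fun X hX => by simpa only [Triangulated.TStructure.ge_iff_isGE] using T0.toTStructure.isGE₂ X hX _)
          (fun X hX => (T0.toTStructure.isGE_of_isZero hX _).ge)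
          (fun S h => (hS S h).2.ge) hM
    refine ⟨fun X hX => ?_, fun X hX => ?_⟩
    · obtain ⟨q, hq⟩ := T.exists_isGE X
      obtain ⟨F, hF⟩ := exists_heartFiltration T X 0 (min q 0) (by lia) hX
        (T.toTStructure.isGE_of_ge X _ q)
      refine F.isLE _ _ fun i hi hin => ?_
      have := hle _ (F.mem i hi hin)
      have := hF i hi hin
      have := T0.toTStructure.isLE_shift (F.factor i) (-1) (F.deg i) (-1 - F.deg i)
      exact T0.toTStructure.isLE_of_le _ (-1 - F.deg i) _
    · rw [T.toTStructure.isLE_iff_orthogonal 0 1 (by lia)]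
      intro Y f hY
      obtain ⟨p, hp⟩ := T.exists_isLE Y
      obtain ⟨F, hF⟩ := exists_heartFiltration T Y (max p 0) 1 (by lia)
        (T.toTStructure.isLE_of_le Y p _) hY
      have : T0.toTStructure.IsGE Y (-(N - 1) + 1) := F.isGE _ _ fun i hi hin => by
        have := hge _ (F.mem i hi hin)
        have := hF i hi hin
        have := T0.toTStructure.isGE_shift (F.factor i) (-(N - 1)) (F.deg i)
          (-(N - 1) - F.deg i)
        exact T0.toTStructure.isGE_of_ge _ _ (-(N - 1) - F.deg i)
      exact T0.toTStructure.zero f (-(N - 1)) (-(N - 1) + 1)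

end Paper
end

section
/- Let k be an algebraically closed field and D a k-linear triangulated category with finite-dimensional Hom spaces. Let H0 and H be finite hearts of bounded t-structures on D with H0[1] ≤ H ≤ H0[N-1] for an integer N ≥ 2, and let S be a rigid simple object of H. Then, with homology taken with respect to H0: (1) the simple backward tilt H^♭_S satisfies H0[1] ≤ H^♭_S ≤ H0[N-1] if and only if H^1(S) = 0; (2) the simple forward tilt H^♯_S satisfies H0[1] ≤ H^♯_S ≤ H0[N-1] if and only if H^{N-1}(S) = 0. -/
open CategoryTheory Category Limits Pretriangulated ZeroObject

universe v u

namespace Paper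

variable (C : Type u) [Category.{v} C] [HasZeroObject C] [HasShift C ℤ]
  [Preadditive C] [∀ n : ℤ, (shiftFunctor C n).Additive] [Pretriangulated C]

variable {C}

variable (C)

section Aux

set_option linter.unusedSectionVars false

variable {C}

/-- All morphisms from `X` to `Y` vanish. -/
def HomZero (X Y : C) : Prop := ∀ f : X ⟶ Y, f = 0

lemma HomZero.of_iso {X X' Y Y' : C} (h : HomZero X Y) (e : X ≅ X') (e' : Y ≅ Y') :
    HomZero X' Y' := fun f => by
  have h1 := h (e.hom ≫ f ≫ e'.inv)
  simpa using congrArg (fun t => e.inv ≫ t ≫ e'.hom) h1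

lemma homZero_shift_iff (X Y : C) (a : ℤ) : HomZero (X⟦a⟧) (Y⟦a⟧) ↔ HomZero X Y := by
  constructor
  · intro h f
    apply (shiftFunctor C a).map_injective
    rw [Functor.map_zero]
    exact h _
  · intro h f
    obtain ⟨g, rfl⟩ := (shiftFunctor C a).map_surjective f
    rw [h g, Functor.map_zero]

lemma homZero_self_iff (X : C) : HomZero X X ↔ IsZero X :=
  ⟨fun h => (IsZero.iff_id_eq_zero X).2 (h _), fun h _ => h.eq_of_src _ _⟩

lemma isZero_shift_iff (X : C) (a : ℤ) : IsZero (X⟦a⟧) ↔ IsZero X := by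
  rw [← homZero_self_iff, ← homZero_self_iff, homZero_shift_iff]

/-- The iso `X⟦a⟧⟦b⟧ ≅ X⟦c⟧` for `a + b = c`. -/
noncomputable def shiftShiftIso (X : C) (a b c : ℤ) (h : a + b = c) : X⟦a⟧⟦b⟧ ≅ X⟦c⟧ :=
  ((shiftFunctorAdd' C a b c h).app X).symm

/-- The iso `X⟦a⟧⟦b⟧ ≅ X` for `a + b = 0`. -/
noncomputable def shiftCancelIso (X : C) (a b : ℤ) (h : a + b = 0) : X⟦a⟧⟦b⟧ ≅ X :=
  (shiftFunctorCompIsoId C a b h).app X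

lemma HomZero.middle_left {Δ : Triangle C} (hΔ : Δ ∈ distTriang C) {Y : C}
    (h₁ : HomZero Δ.obj₁ Y) (h₃ : HomZero Δ.obj₃ Y) : HomZero Δ.obj₂ Y := fun f => by
  obtain ⟨g, rfl⟩ := Triangle.yoneda_exact₂ Δ hΔ f (h₁ _)
  rw [h₃ g, comp_zero]

lemma HomZero.middle_right {Δ : Triangle C} (hΔ : Δ ∈ distTriang C) {X : C}
    (h₁ : HomZero X Δ.obj₁) (h₃ : HomZero X Δ.obj₃) : HomZero X Δ.obj₂ := fun f => by
  obtain ⟨g, rfl⟩ := Triangle.coyoneda_exact₂ Δ hΔ f (h₃ _)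
  rw [h₁ g, zero_comp]

lemma isZero_middle {Δ : Triangle C} (hΔ : Δ ∈ distTriang C)
    (h₁ : IsZero Δ.obj₁) (h₃ : IsZero Δ.obj₃) : IsZero Δ.obj₂ :=
  (homZero_self_iff _).1 (HomZero.middle_left hΔ (fun _ => h₁.eq_of_src _ _)
    (fun _ => h₃.eq_of_src _ _))

lemma eq_zero_of_mor₂_comp {Δ : Triangle C} (hΔ : Δ ∈ distTriang C) {W : C}
    (h : HomZero (Δ.obj₁⟦(1 : ℤ)⟧) W) (r : Δ.obj₃ ⟶ W) (hr : Δ.mor₂ ≫ r = 0) : r = 0 := by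
  obtain ⟨z, rfl⟩ := Triangle.yoneda_exact₃ Δ hΔ r hr
  rw [h z, comp_zero]

lemma eq_zero_of_comp_mor₁ {Δ : Triangle C} (hΔ : Δ ∈ distTriang C) {W : C}
    (h : HomZero W (Δ.obj₃⟦(-1 : ℤ)⟧)) (r : W ⟶ Δ.obj₁) (hr : r ≫ Δ.mor₁ = 0) : r = 0 := by
  obtain ⟨z, rfl⟩ := Triangle.coyoneda_exact₂ _ (inv_rot_of_distTriang _ hΔ) r hr
  exact (congrArg (· ≫ Δ.invRotate.mor₁) (h z)).trans zero_comp

lemma eq_zero_of_comp_mor₃ {Δ : Triangle C} (hΔ : Δ ∈ distTriang C) {W : C}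
    (h : HomZero W Δ.obj₂) (r : W ⟶ Δ.obj₃) (hr : r ≫ Δ.mor₃ = 0) : r = 0 := by
  obtain ⟨z, rfl⟩ := Triangle.coyoneda_exact₃ Δ hΔ r hr
  rw [h z, zero_comp]

/-- `X`, `Y`, `Z` are the objects of a distinguished triangle. -/
def HasTriangle (X Y Z : C) : Prop :=
  ∃ (f : X ⟶ Y) (g : Y ⟶ Z) (h : Z ⟶ X⟦(1 : ℤ)⟧), Triangle.mk f g h ∈ distTriang C

lemma HasTriangle.of_iso {X Y Z X' Y' Z' : C} (h : HasTriangle X Y Z) (e₁ : X ≅ X')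
    (e₂ : Y ≅ Y') (e₃ : Z ≅ Z') : HasTriangle X' Y' Z' := by
  obtain ⟨f, g, t, hT⟩ := h
  refine ⟨e₁.inv ≫ f ≫ e₂.hom, e₂.inv ≫ g ≫ e₃.hom, e₃.inv ≫ t ≫ e₁.hom⟦(1 : ℤ)⟧',
    isomorphic_distinguished _ hT _ (Triangle.isoMk _ _ e₁.symm e₂.symm e₃.symm ?_ ?_ ?_)⟩
  · change (e₁.inv ≫ f ≫ e₂.hom) ≫ e₂.inv = e₁.inv ≫ f
    simp
  · change (e₂.inv ≫ g ≫ e₃.hom) ≫ e₃.inv = e₂.inv ≫ g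
    simp
  · change (e₃.inv ≫ t ≫ e₁.hom⟦(1 : ℤ)⟧') ≫ e₁.inv⟦(1 : ℤ)⟧' = e₃.inv ≫ t
    simp [← Functor.map_comp]

namespace TStr

variable (T : TStr C)

/-- Membership in the shifted aisle `P[m]`. -/
def GE (m : ℤ) (X : C) : Prop := X⟦-m⟧ ∈ T.P

/-- Membership in the shifted coaisle `P^⊥[m]`. -/
def LT (m : ℤ) (X : C) : Prop := X⟦-m⟧ ∈ perp C T.P

variable {T}

lemma mem_of_iso_s12 {X Y : C} (e : X ≅ Y) (h : X ∈ T.P) : Y ∈ T.P :=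
  T.summand X Y e.inv e.hom (by simp) h

lemma perp_of_iso {X Y : C} (e : X ≅ Y) (h : X ∈ perp C T.P) : Y ∈ perp C T.P :=
  fun F hF => HomZero.of_iso (h F hF) (Iso.refl F) e

lemma GE.of_iso {m : ℤ} {X Y : C} (h : T.GE m X) (e : X ≅ Y) : T.GE m Y :=
  mem_of_iso_s12 ((shiftFunctor C (-m)).mapIso e) h

lemma LT.of_iso {m : ℤ} {X Y : C} (h : T.LT m X) (e : X ≅ Y) : T.LT m Y :=
  perp_of_iso ((shiftFunctor C (-m)).mapIso e) h

lemma GE.shift {m : ℤ} {X : C} (h : T.GE m X) (a m' : ℤ) (hm : m + a = m') :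
    T.GE m' (X⟦a⟧) :=
  mem_of_iso_s12 (shiftShiftIso X a (-m') (-m) (by lia)).symm h

lemma LT.shift {m : ℤ} {X : C} (h : T.LT m X) (a m' : ℤ) (hm : m + a = m') :
    T.LT m' (X⟦a⟧) :=
  perp_of_iso (shiftShiftIso X a (-m') (-m) (by lia)).symm h

lemma ge_zero_iff (X : C) : T.GE 0 X ↔ X ∈ T.P := by
  have e : X⟦(-0 : ℤ)⟧ ≅ X := (shiftFunctorZero' C (-0 : ℤ) (by simp)).app X
  exact ⟨mem_of_iso_s12 e, mem_of_iso_s12 e.symm⟩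

lemma mem_heart_iff (X : C) : X ∈ heart C T ↔ T.GE 0 X ∧ T.LT 1 X := by
  rw [ge_zero_iff]; rfl

lemma GE.homZero {m : ℤ} {X Y : C} (hX : T.GE m X) (hY : T.LT m Y) : HomZero X Y :=
  (homZero_shift_iff X Y (-m)).1 (hY _ hX)

lemma ge_of_homZero {m : ℤ} {X : C} (h : ∀ Y, T.LT m Y → HomZero X Y) : T.GE m X := by
  obtain ⟨F, G, f, g, d, hF, hG, hT⟩ := T.exists_triangle (X⟦-m⟧)
  have e := shiftCancelIso G m (-m) (by lia)
  have hg : HomZero (X⟦-m⟧) G :=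
    HomZero.of_iso ((homZero_shift_iff X (G⟦m⟧) (-m)).2
      (h _ (perp_of_iso e.symm hG))) (Iso.refl _) e
  obtain ⟨i, hi⟩ := Triangle.coyoneda_exact₂ _ hT (𝟙 (X⟦-m⟧)) (hg _)
  exact T.summand F _ i f hi.symm hF

lemma lt_of_homZero {m : ℤ} {Y : C} (h : ∀ X, T.GE m X → HomZero X Y) : T.LT m Y := by
  intro F hF
  have e := shiftCancelIso F m (-m) (by lia)
  exact HomZero.of_iso ((homZero_shift_iff (F⟦m⟧) Y (-m)).2
    (h _ (mem_of_iso_s12 e.symm hF))) e (Iso.refl _)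

lemma ge_of_isZero {m : ℤ} {X : C} (h : IsZero X) : T.GE m X :=
  ge_of_homZero fun _ _ _ => h.eq_of_src _ _

lemma lt_of_isZero {m : ℤ} {X : C} (h : IsZero X) : T.LT m X :=
  lt_of_homZero fun _ _ _ => h.eq_of_tgt _ _

lemma ge_middle {m : ℤ} {Δ : Triangle C} (hΔ : Δ ∈ distTriang C)
    (h₁ : T.GE m Δ.obj₁) (h₃ : T.GE m Δ.obj₃) : T.GE m Δ.obj₂ :=
  ge_of_homZero fun _ hY => HomZero.middle_left hΔ (h₁.homZero hY) (h₃.homZero hY)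

lemma lt_middle {m : ℤ} {Δ : Triangle C} (hΔ : Δ ∈ distTriang C)
    (h₁ : T.LT m Δ.obj₁) (h₃ : T.LT m Δ.obj₃) : T.LT m Δ.obj₂ :=
  lt_of_homZero fun _ hX => HomZero.middle_right hΔ (hX.homZero h₁) (hX.homZero h₃)

lemma GE.mono {m m' : ℤ} {X : C} (h : T.GE m X) (hm : m' ≤ m) : T.GE m' X := by
  obtain ⟨n, rfl⟩ := Int.le.dest hm
  clear hm
  induction n with
  | zero => simpa using h
  | succ n ih =>
    apply ih
    refine mem_of_iso_s12 (shiftShiftIso X _ 1 _ ?_) (T.shift_mem _ h)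
    push_cast
    ring

lemma LT.mono {m m' : ℤ} {X : C} (h : T.LT m X) (hm : m ≤ m') : T.LT m' X :=
  lt_of_homZero fun _ hF => (hF.mono hm).homZero h

lemma isZero_of_ge_of_lt {m : ℤ} {X : C} (h : T.GE m X) (h' : T.LT m X) : IsZero X :=
  (homZero_self_iff X).1 (h.homZero h')

variable (T)

lemma exists_ge (X : C) : ∃ m, T.GE m X := by
  obtain ⟨a, ha⟩ := T.bounded_above X
  exact ⟨-a, ha _ (by simp)⟩

lemma exists_lt (X : C) : ∃ m, T.LT m X := by
  obtain ⟨a, ha⟩ := T.bounded_below X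
  exact ⟨-a, ha _ (by simp)⟩

lemma exists_triangle_at (m : ℤ) (E : C) :
    ∃ (F G : C) (f : F ⟶ E) (g : E ⟶ G) (h : G ⟶ F⟦(1 : ℤ)⟧),
      T.GE m F ∧ T.LT m G ∧ Triangle.mk f g h ∈ distTriang C := by
  obtain ⟨F, G, f, g, h, hF, hG, hT⟩ := T.exists_triangle (E⟦-m⟧)
  have hT' := Triangle.shift_distinguished _ hT m
  obtain ⟨f', g', h', hT''⟩ := HasTriangle.of_iso ⟨_, _, _, hT'⟩ (Iso.refl (F⟦m⟧))
    (shiftCancelIso E (-m) m (by lia)) (Iso.refl (G⟦m⟧))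
  exact ⟨F⟦m⟧, G⟦m⟧, f', g', h', mem_of_iso_s12 (shiftCancelIso F m (-m) (by lia)).symm hF,
    perp_of_iso (shiftCancelIso G m (-m) (by lia)).symm hG, hT''⟩

end TStr

lemma ge_factor {T : TStr C} {X : C} (hX : X ∈ heart C T) (d : ℤ) : T.GE d (X⟦d⟧) :=
  ((TStr.mem_heart_iff X).1 hX).1.shift d d (by lia)

lemma lt_factor {T : TStr C} {X : C} (hX : X ∈ heart C T) (d : ℤ) : T.LT (d + 1) (X⟦d⟧) :=
  ((TStr.mem_heart_iff X).1 hX).2.shift d _ (by lia)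

namespace HeartFiltration

variable {T : TStr C} {M : C}

/-- A property stable under extensions which holds for the first `j` factors holds for
the `j`-th step of the filtration. -/
lemma obj_induction (F : HeartFiltration C T M) (Q : C → Prop) (h0 : ∀ X, IsZero X → Q X)
    (hext : ∀ Δ : Triangle C, Δ ∈ distTriang C → Q Δ.obj₁ → Q Δ.obj₃ → Q Δ.obj₂)
    (j : ℕ) (hj : j ≤ F.n)
    (h : ∀ i, 1 ≤ i → i ≤ j → Q ((F.factor i)⟦F.deg i⟧)) : Q (F.obj j) := by
  induction j with
  | zero => exact h0 _ F.zero
  | succ j ih =>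
    obtain ⟨f, g, d, hT⟩ := F.tri (j + 1) (by lia) hj
    exact hext _ hT (ih (by lia) fun i h1 h2 => h i h1 (by lia)) (h _ (by lia) le_rfl)

lemma ge_obj (F : HeartFiltration C T M) {T' : TStr C} {m : ℤ} {j : ℕ} (hj : j ≤ F.n)
    (h : ∀ i, 1 ≤ i → i ≤ j → IsZero (F.factor i) ∨ T'.GE m ((F.factor i)⟦F.deg i⟧)) :
    T'.GE m (F.obj j) :=
  F.obj_induction _ (fun _ => TStr.ge_of_isZero) (fun _ => TStr.ge_middle) j hj
    fun i h1 h2 => (h i h1 h2).elim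
      (fun h => TStr.ge_of_isZero ((isZero_shift_iff _ _).2 h)) id

lemma ge_of_factors (F : HeartFiltration C T M) {T' : TStr C} {m : ℤ}
    (h : ∀ i, 1 ≤ i → i ≤ F.n → IsZero (F.factor i) ∨ T'.GE m ((F.factor i)⟦F.deg i⟧)) :
    T'.GE m M :=
  (F.ge_obj le_rfl h).of_iso F.top

lemma lt_of_factors (F : HeartFiltration C T M) {m : ℤ}
    (h : ∀ i, 1 ≤ i → i ≤ F.n → IsZero (F.factor i) ∨ F.deg i < m) : T.LT m M :=
  (F.obj_induction _ (fun _ => TStr.lt_of_isZero) (fun _ => TStr.lt_middle) _ le_rfl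
    fun i h1 h2 => (h i h1 h2).elim
      (fun h => TStr.lt_of_isZero ((isZero_shift_iff _ _).2 h))
      (fun h => (lt_factor (F.mem i h1 h2) _).mono (by lia))).of_iso F.top

lemma ge_deg_obj (F : HeartFiltration C T M) {m : ℤ} {i : ℕ} (hi : i ≤ F.n)
    (h : ∀ j, 1 ≤ j → j ≤ i → m ≤ F.deg j) : T.GE m (F.obj i) :=
  F.ge_obj hi fun j h1 h2 => Or.inr ((ge_factor (F.mem j h1 (by lia)) _).mono (h j h1 h2))

lemma deg_le (F : HeartFiltration C T M) {i j : ℕ} (h1 : 1 ≤ i) (h2 : i ≤ j)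
    (h3 : j ≤ F.n) : F.deg j ≤ F.deg i := by
  rcases h2.eq_or_lt with rfl | h
  · exact le_rfl
  · exact (F.strict i j h1 h h3).le

lemma isZero_obj_of_lt (F : HeartFiltration C T M) {m : ℤ} {i : ℕ} (h1 : 1 ≤ i)
    (hi : i ≤ F.n) (hd : m ≤ F.deg i) (h : T.LT m (F.obj i)) :
    IsZero (F.obj i) ∧ IsZero (F.obj (i - 1)) := by
  have hz : IsZero (F.obj i) :=
    TStr.isZero_of_ge_of_lt (F.ge_deg_obj hi fun j h1 h2 => F.deg_le h1 h2 hi) (h.mono hd)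
  refine ⟨hz, ?_⟩
  obtain ⟨f, g, d, hT⟩ := F.tri i h1 hi
  refine TStr.isZero_of_ge_of_lt (T := T) (m := F.deg i + 1)
    (F.ge_deg_obj (by lia) fun j hj hj' => F.strict j i hj (by lia) hi) ?_
  exact TStr.lt_middle (inv_rot_of_distTriang _ hT)
    (((lt_factor (F.mem i h1 hi) _).shift (-1) (F.deg i) (by lia)).mono (by lia))
    (TStr.lt_of_isZero hz)

lemma lt_obj (F : HeartFiltration C T M) {m : ℤ} (h : T.LT m M) (k : ℕ) (hk : k ≤ F.n) :
    T.LT m (F.obj (F.n - k)) := by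
  induction k with
  | zero => exact h.of_iso F.top.symm
  | succ k ih =>
    have ih := ih (by lia)
    have e : F.n - (k + 1) = F.n - k - 1 := by lia
    rw [e]
    by_cases hd : m ≤ F.deg (F.n - k)
    · exact TStr.lt_of_isZero (F.isZero_obj_of_lt (by lia) (by lia) hd ih).2
    · obtain ⟨f, g, d, hT⟩ := F.tri (F.n - k) (by lia) (by lia)
      exact TStr.lt_middle (inv_rot_of_distTriang _ hT)
        (((lt_factor (F.mem _ (by lia) (by lia)) _).shift (-1) _ rfl).mono (by lia)) ih

/-- An object of `P^⊥[m]` has no homology in degrees `≥ m`. -/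
lemma isZero_factor_of_lt (F : HeartFiltration C T M) {m : ℤ} (h : T.LT m M) {i : ℕ}
    (h1 : 1 ≤ i) (hi : i ≤ F.n) (hd : m ≤ F.deg i) : IsZero (F.factor i) := by
  have h' := F.lt_obj h (F.n - i) (by lia)
  rw [show F.n - (F.n - i) = i by lia] at h'
  obtain ⟨hz, hz'⟩ := F.isZero_obj_of_lt h1 hi hd h'
  obtain ⟨f, g, d, hT⟩ := F.tri i h1 hi
  rw [← isZero_shift_iff _ (F.deg i)]
  exact isZero_middle (rot_of_distTriang _ hT) hz ((isZero_shift_iff _ _).2 hz')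

lemma isZero_factor_of_ge_obj (F : HeartFiltration C T M) {m : ℤ} {i : ℕ}
    (h1 : 1 ≤ i) (hi : i ≤ F.n) (hd : F.deg i < m) (h : T.GE m (F.obj i)) :
    IsZero (F.factor i) := by
  obtain ⟨f, g, d, hT⟩ := F.tri i h1 hi
  rw [← isZero_shift_iff _ (F.deg i)]
  refine TStr.isZero_of_ge_of_lt (T := T) (m := F.deg i + 1) ?_ (lt_factor (F.mem i h1 hi) _)
  refine TStr.ge_middle (rot_of_distTriang _ hT) (h.mono (by lia)) ?_
  refine TStr.GE.shift (m := F.deg i + 1) ?_ 1 _ rfl |>.mono (by lia)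
  exact F.ge_deg_obj (by lia) fun j hj hj' => F.strict j i hj (by lia) hi

lemma ge_obj_of_ge (F : HeartFiltration C T M) {m : ℤ} (h : T.GE m M) (k : ℕ)
    (hk : k ≤ F.n) : T.GE m (F.obj (F.n - k)) := by
  induction k with
  | zero => exact h.of_iso F.top.symm
  | succ k ih =>
    have ih := ih (by lia)
    have e : F.n - (k + 1) = F.n - k - 1 := by lia
    rw [e]
    by_cases hd : F.deg (F.n - k) < m
    · have hz := F.isZero_factor_of_ge_obj (by lia) (by lia) hd ih
      obtain ⟨f, g, d, hT⟩ := F.tri (F.n - k) (by lia) (by lia)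
      exact TStr.ge_middle (inv_rot_of_distTriang _ hT)
        (TStr.ge_of_isZero ((isZero_shift_iff _ _).2 ((isZero_shift_iff _ _).2 hz))) ih
    · refine F.ge_deg_obj (by lia) fun j hj hj' => ?_
      have := F.strict j (F.n - k) hj (by lia) (by lia)
      lia

/-- An object of `P[m]` has no homology in degrees `< m`. -/
lemma isZero_factor_of_ge (F : HeartFiltration C T M) {m : ℤ} (h : T.GE m M) {i : ℕ}
    (h1 : 1 ≤ i) (hi : i ≤ F.n) (hd : F.deg i < m) : IsZero (F.factor i) := by
  have hobj := F.ge_obj_of_ge h (F.n - i) (by lia)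
  rw [show F.n - (F.n - i) = i by lia] at hobj
  exact F.isZero_factor_of_ge_obj h1 hi hd hobj

/-- The homology of a shifted heart object is concentrated in one degree. -/
lemma factor_of_shift_heart {X : C} {d : ℤ} (F : HeartFiltration C T (X⟦d⟧))
    (hX : X ∈ heart C T) {i : ℕ} (h1 : 1 ≤ i) (hi : i ≤ F.n) :
    IsZero (F.factor i) ∨ (F.deg i = d ∧ Nonempty (F.factor i ≅ X)) := by
  have hz : ∀ j, 1 ≤ j → j ≤ F.n → F.deg j ≠ d → IsZero (F.factor j) := by
    intro j h1 hj hne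
    rcases lt_or_gt_of_ne hne with h | h
    · exact F.isZero_factor_of_ge (ge_factor hX d) h1 hj h
    · exact F.isZero_factor_of_lt (lt_factor hX d) h1 hj h
  by_cases hd : F.deg i = d
  swap
  · exact Or.inl (hz i h1 hi hd)
  refine Or.inr ⟨hd, ?_⟩
  have hprev : IsZero (F.obj (i - 1)) := by
    refine F.obj_induction IsZero (fun _ => id) (fun _ => isZero_middle) _ (by lia)
      fun j hj hj' => (isZero_shift_iff _ _).2 (hz j hj (by lia) ?_)
    have := F.strict j i hj (by lia) hi
    lia
  have hnext : ∀ k, i + k ≤ F.n → Nonempty (F.obj i ≅ F.obj (i + k)) := by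
    intro k
    induction k with
    | zero => exact fun _ => ⟨Iso.refl _⟩
    | succ k ih =>
      intro hk
      obtain ⟨e⟩ := ih (by lia)
      obtain ⟨f, g, t, hT⟩ := F.tri (i + (k + 1)) (by lia) hk
      have := F.strict i (i + (k + 1)) h1 (by lia) hk
      have : IsIso f := (Triangle.isZero₃_iff_isIso₁ _ hT).1
        ((isZero_shift_iff _ _).2 (hz _ (by lia) hk (by lia)))
      exact ⟨e ≪≫ asIso f⟩
  obtain ⟨e⟩ := hnext (F.n - i) (by lia)
  rw [show i + (F.n - i) = F.n by lia] at e
  obtain ⟨f, g, t, hT⟩ := F.tri i h1 hi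
  have : IsIso g := (Triangle.isZero₁_iff_isIso₂ _ hT).1 hprev
  have e' : (F.factor i)⟦d⟧ ≅ (F.factor i)⟦F.deg i⟧ := eqToIso (by rw [hd])
  exact ⟨(shiftFunctor C d).preimageIso (e' ≪≫ (asIso g).symm ≪≫ e ≪≫ F.top)⟩

lemma exists_of_ge_of_lt (T : TStr C) (l : ℕ) : ∀ (M : C) (a : ℤ), T.GE a M → T.LT (a + l) M →
    ∃ F : HeartFiltration C T M, ∀ i, 1 ≤ i → i ≤ F.n → a ≤ F.deg i := by
  induction l with
  | zero =>
    intro M a h h'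
    have hz : IsZero M := TStr.isZero_of_ge_of_lt h (by simpa using h')
    exact ⟨{ n := 0, obj := fun _ => M, deg := fun _ => 0, factor := fun _ => M, zero := hz
             top := Iso.refl _
             mem := fun i _ _ => by lia
             strict := fun i j _ _ _ => by lia
             tri := fun i _ _ => by lia }, fun i _ h2 => by simp at h2; lia⟩
  | succ l ih =>
    intro M a h h'
    obtain ⟨A, B, f, g, t, hA, hB, hT⟩ := T.exists_triangle_at (a + 1) M
    have hB' : T.GE a B := TStr.ge_middle (rot_of_distTriang _ hT) h
      (hA.shift 1 _ rfl |>.mono (by lia))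
    have hA' : T.LT (a + 1 + l) A := TStr.lt_middle (inv_rot_of_distTriang _ hT)
      ((hB.shift (-1) _ rfl).mono (by lia)) (h'.mono (by push_cast; lia))
    obtain ⟨F, hF⟩ := ih A (a + 1) hA hA'
    have hBh : B⟦-a⟧ ∈ heart C T := (TStr.mem_heart_iff _).2
      ⟨hB'.shift _ _ (by lia), hB.shift _ _ (by lia)⟩
    refine ⟨{ n := F.n + 1
              obj := fun j => if j ≤ F.n then F.obj j else M
              deg := fun j => if j ≤ F.n then F.deg j else a
              factor := fun j => if j ≤ F.n then F.factor j else B⟦-a⟧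
              zero := by simpa using F.zero
              top := eqToIso (by simp)
              mem := ?_, strict := ?_, tri := ?_ }, ?_⟩
    · intro i h1 hi
      split_ifs with hc
      · exact F.mem i h1 hc
      · exact hBh
    · intro i j h1 hij hj
      have : i ≤ F.n := by lia
      simp only [this, if_true]
      split_ifs with hc
      · exact F.strict i j h1 hij hc
      · have := hF i h1 this
        lia
    · intro i h1 hi
      change HasTriangle _ _ _
      by_cases hc : i ≤ F.n
      · have hc' : i - 1 ≤ F.n := by lia
        simp only [hc, hc', if_true]
        exact F.tri i h1 hc
      · obtain rfl : i = F.n + 1 := by lia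
        simp only [hc, if_false, Nat.add_sub_cancel, le_refl, if_true]
        exact HasTriangle.of_iso ⟨f, g, t, hT⟩ F.top.symm (Iso.refl _)
          (shiftCancelIso B (-a) a (by lia)).symm
    · intro i h1 hi
      dsimp only
      split_ifs with hc
      · have := hF i h1 hc
        lia
      · exact le_rfl

lemma exists_of_ge {T : TStr C} {M : C} {a : ℤ} (h : T.GE a M) :
    ∃ F : HeartFiltration C T M, ∀ i, 1 ≤ i → i ≤ F.n → a ≤ F.deg i := by
  obtain ⟨b, hb⟩ := T.exists_lt M
  exact exists_of_ge_of_lt T (b - a).toNat M a h (hb.mono (by lia))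

lemma nonempty (T : TStr C) (M : C) : Nonempty (HeartFiltration C T M) := by
  obtain ⟨a, ha⟩ := T.exists_ge M
  exact ⟨(exists_of_ge ha).choose⟩

end HeartFiltration

/-- An inclusion of a heart in an aisle extends to an inclusion of aisles. -/
lemma ge_of_heart_ge {T T' : TStr C} {m : ℤ} (h : ∀ X ∈ heart C T, T'.GE m X)
    {X : C} {a : ℤ} (hX : T.GE a X) : T'.GE (m + a) X := by
  obtain ⟨F, hF⟩ := HeartFiltration.exists_of_ge hX
  refine F.ge_of_factors fun i h1 hi => Or.inr ?_
  have := hF i h1 hi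
  exact ((h _ (F.mem i h1 hi)).shift _ _ rfl).mono (by lia)

/-- An aisle containing the simples of a finite heart contains the heart. -/
lemma ge_of_simple_ge {T T' : TStr C} (hfin : FiniteHeart C T) {m : ℤ}
    (h : ∀ s, IsSimpleIn C (heart C T) s → T'.GE m s) {X : C} (hX : X ∈ heart C T) :
    T'.GE m X := by
  obtain ⟨l, obj, h0, ⟨e⟩, hobj⟩ := hfin.2 X hX
  refine TStr.GE.of_iso ?_ e
  have key : ∀ i ≤ l, T'.GE m (obj i) := by
    intro i
    induction i with
    | zero => exact fun _ => TStr.ge_of_isZero h0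
    | succ i ih =>
      intro hi
      obtain ⟨s, f, g, t, hs, hT⟩ := hobj i (by lia)
      exact TStr.ge_middle hT (ih (by lia)) (h s hs)
  exact key l le_rfl

/-- Schur's lemma in the heart of a t-structure. -/
lemma isIso_of_simple {T : TStr C} {X Y : C} (hX : IsSimpleIn C (heart C T) X)
    (hY : IsSimpleIn C (heart C T) Y) (f : X ⟶ Y) (hf : f ≠ 0) : IsIso f := by
  obtain ⟨K, p, q, hK⟩ := distinguished_cocone_triangle f
  obtain ⟨A, B, a, b, c, hA, hB, hT⟩ := T.exists_triangle_at 1 K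
  obtain ⟨hX0, hX1⟩ := (TStr.mem_heart_iff X).1 hX.1
  obtain ⟨hY0, hY1⟩ := (TStr.mem_heart_iff Y).1 hY.1
  have hfp : f ≫ p = 0 := comp_distTriang_mor_zero₁₂ _ hK
  have hqf : q ≫ f⟦(1 : ℤ)⟧' = 0 := comp_distTriang_mor_zero₃₁ _ hK
  have hK0 : T.GE 0 K := TStr.ge_middle (rot_of_distTriang _ hK) hY0
    ((hX0.shift 1 _ rfl).mono (by lia))
  have hK2 : T.LT 2 K := TStr.lt_middle (rot_of_distTriang _ hK) (hY1.mono (by lia))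
    (hX1.shift 1 _ (by lia))
  have hB0 : T.GE 0 B := TStr.ge_middle (rot_of_distTriang _ hT) hK0
    ((hA.shift 1 _ rfl).mono (by lia))
  have hA2 : T.LT 2 A := TStr.lt_middle (inv_rot_of_distTriang _ hT)
    ((hB.shift (-1) _ rfl).mono (by lia)) hK2
  -- the cokernel `B` of `f` vanishes
  have hBz : IsZero B := by
    obtain ⟨I, u, w, hI⟩ := distinguished_cocone_triangle₁ (p ≫ b)
    have hI1 : T.LT 1 I := TStr.lt_middle (inv_rot_of_distTriang _ hI)
      ((hB.shift (-1) _ rfl).mono (by lia)) hY1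
    have hI0 : T.GE 0 I := by
      suffices h : T.GE 1 (I⟦(1 : ℤ)⟧) from
        (h.shift (-1) 0 (by lia)).of_iso (shiftCancelIso I 1 (-1) (by lia))
      refine TStr.ge_of_homZero fun Z hZ r => ?_
      have h1 : p ≫ b ≫ w ≫ r = 0 := by
        have : (p ≫ b) ≫ w = 0 := comp_distTriang_mor_zero₂₃ _ hI
        rw [← assoc b, ← assoc p, ← assoc p, this, zero_comp]
      have h2 : b ≫ w ≫ r = 0 :=
        eq_zero_of_mor₂_comp hK ((hX0.shift 1 1 (by lia)).homZero hZ) (b ≫ w ≫ r) h1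
      have h3 : w ≫ r = 0 :=
        eq_zero_of_mor₂_comp hT (((hA.shift 1 2 (by lia)).mono (by lia)).homZero hZ) (w ≫ r) h2
      exact eq_zero_of_mor₂_comp (rot_of_distTriang _ hI)
        ((hY0.shift 1 1 (by lia)).homZero hZ) r h3
    rcases hY.2.2 I B u (p ≫ b) w ((TStr.mem_heart_iff _).2 ⟨hI0, hI1⟩)
      ((TStr.mem_heart_iff _).2 ⟨hB0, hB⟩) hI with h | h
    · exfalso
      have : IsIso (p ≫ b) := (Triangle.isZero₁_iff_isIso₂ _ hI).1 h
      apply hf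
      rw [← cancel_mono (p ≫ b), ← assoc, hfp, zero_comp, zero_comp]
    · exact h
  -- the kernel `A[-1]` of `f` vanishes
  have hAz : IsZero A := by
    let e := shiftCancelIso A (-1) 1 (by lia)
    obtain ⟨l, hl⟩ := (shiftFunctor C (1 : ℤ)).map_surjective (e.hom ≫ a ≫ q)
    obtain ⟨J, u, w, hJ⟩ := distinguished_cocone_triangle l
    have hA' : T.GE 0 (A⟦(-1 : ℤ)⟧) := hA.shift _ _ (by lia)
    have hJ0 : T.GE 0 J := TStr.ge_middle (rot_of_distTriang _ hJ)
      hX0 ((hA'.shift 1 1 (by lia)).mono (by lia))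
    have hJ1 : T.LT 1 J := by
      refine TStr.lt_of_homZero fun Z hZ r => ?_
      have h1 : (r ≫ w ≫ e.hom ≫ a) ≫ q = 0 := by
        have : w ≫ l⟦(1 : ℤ)⟧' = 0 := comp_distTriang_mor_zero₃₁ _ hJ
        rw [hl] at this
        simp only [assoc, this, comp_zero]
      have h2 : (r ≫ w ≫ e.hom) ≫ a = 0 := by
        rw [assoc, assoc]
        exact eq_zero_of_comp_mor₃ hK (hZ.homZero hY1) (r ≫ w ≫ e.hom ≫ a) h1
      have h3 : r ≫ w ≫ e.hom = 0 :=
        eq_zero_of_comp_mor₁ hT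
          (hZ.homZero ((hB.shift (-1) 0 (by lia)).mono (by lia))) (r ≫ w ≫ e.hom) h2
      have h4 : r ≫ w = 0 := by
        rw [← cancel_mono e.hom, assoc, h3, zero_comp]
      exact eq_zero_of_comp_mor₃ hJ (hZ.homZero hX1) r h4
    rcases hX.2.2 _ J l u w ((TStr.mem_heart_iff _).2 ⟨hA', hA2.shift _ _ (by lia)⟩)
      ((TStr.mem_heart_iff _).2 ⟨hJ0, hJ1⟩) hJ with h | h
    · exact (isZero_shift_iff _ _).1 h
    · exfalso
      have : IsIso l := (Triangle.isZero₃_iff_isIso₁ _ hJ).1 h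
      apply hf
      apply (shiftFunctor C (1 : ℤ)).map_injective
      rw [← cancel_epi (l⟦(1 : ℤ)⟧'), hl, Functor.map_zero, comp_zero, assoc, assoc, hqf,
        comp_zero, comp_zero]
  have hKz : IsZero K := isZero_middle hT hAz hBz
  exact (Triangle.isZero₃_iff_isIso₁ _ hK).1 hKz

/-- Up to isomorphism there are nonzero maps between simples only from a simple to itself. -/
lemma nonempty_iso_or_homZero {T : TStr C} {X Y : C} (hX : IsSimpleIn C (heart C T) X)
    (hY : IsSimpleIn C (heart C T) Y) : Nonempty (X ≅ Y) ∨ HomZero X Y := by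
  by_cases h : HomZero X Y
  · exact Or.inr h
  · obtain ⟨f, hf⟩ := not_forall.1 h
    have := isIso_of_simple hX hY f hf
    exact Or.inl ⟨asIso f⟩

/-- The iso `X⟦0⟧ ≅ X`. -/
noncomputable def shiftZeroIso (X : C) : X⟦(0 : ℤ)⟧ ≅ X := (shiftFunctorZero C ℤ).app X

/-- Transport of a heart filtration along an isomorphism. -/
def HeartFiltration.ofIso {T : TStr C} {M M' : C} (F : HeartFiltration C T M) (e : M ≅ M') :
    HeartFiltration C T M' :=
  { F with top := F.top ≪≫ e }

lemma HeartFiltration.factor_of_heart {T : TStr C} {X : C} (F : HeartFiltration C T X)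
    (hX : X ∈ heart C T) {i : ℕ} (h1 : 1 ≤ i) (hi : i ≤ F.n) :
    IsZero (F.factor i) ∨ (F.deg i = 0 ∧ Nonempty (F.factor i ≅ X)) :=
  (F.ofIso (shiftZeroIso X).symm).factor_of_shift_heart hX h1 hi

section Tilt

variable [HasFiniteBiproducts C] {T : TStr C} {S : C}

lemma mem_addObj_of_iso {X : C} (e : X ≅ S) : X ∈ addObj C S :=
  ⟨1, ⟨e ≪≫ (biproductUniqueIso (fun _ : Fin 1 => S)).symm⟩⟩

lemma ge_of_mem_addObj {m : ℤ} (hS : T.GE m S) {X : C} (hX : X ∈ addObj C S) : T.GE m X := by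
  obtain ⟨n, ⟨e⟩⟩ := hX
  refine TStr.GE.of_iso (TStr.ge_of_homZero fun Y hY f => ?_) e.symm
  exact biproduct.hom_ext' _ _ fun j => (hS.homZero hY _).trans comp_zero.symm

lemma shift_mem_simpleSharpSet (hS : S ∈ heart C T) : S⟦(1 : ℤ)⟧ ∈ simpleSharpSet C T S := by
  intro F i h1 hi
  rcases F.factor_of_shift_heart hS h1 hi with h | ⟨h, ⟨e⟩⟩
  · exact Or.inl h
  · exact Or.inr (Or.inl ⟨h, mem_addObj_of_iso e⟩)

lemma shift_mem_simpleFlatSet (hS : S ∈ heart C T) : S⟦(-1 : ℤ)⟧ ∈ simpleFlatSet C T S := by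
  intro F i h1 hi
  rcases F.factor_of_shift_heart hS h1 hi with h | ⟨h, ⟨e⟩⟩
  · exact Or.inl h
  · exact Or.inr (Or.inr ⟨h, mem_addObj_of_iso e⟩)

lemma mem_simpleSharpSet {X : C} (hX : X ∈ heart C T) (h : HomZero X S) :
    X ∈ simpleSharpSet C T S := by
  intro F i h1 hi
  rcases F.factor_of_heart hX h1 hi with h' | ⟨h', ⟨e⟩⟩
  · exact Or.inl h'
  · exact Or.inr (Or.inr ⟨h', F.mem i h1 hi, h.of_iso e.symm (Iso.refl S)⟩)

lemma mem_simpleFlatSet {X : C} (hX : X ∈ heart C T) (h : HomZero S X) :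
    X ∈ simpleFlatSet C T S := by
  intro F i h1 hi
  rcases F.factor_of_heart hX h1 hi with h' | ⟨h', ⟨e⟩⟩
  · exact Or.inl h'
  · exact Or.inr (Or.inl ⟨h', F.mem i h1 hi, h.of_iso (Iso.refl S) e.symm⟩)

variable {T' : TStr C}

/-- The aisle of the simple forward tilt is contained in the original aisle. -/
lemma ge_of_ge_sharp (h : heart C T' = simpleSharpSet C T S) {X : C} (hX : T'.GE 0 X) :
    T.GE 0 X := by
  refine ge_of_heart_ge (m := 0) (fun E hE => ?_) hX
  rw [h] at hE
  obtain ⟨F⟩ := HeartFiltration.nonempty T E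
  refine F.ge_of_factors fun i h1 hi => (hE F i h1 hi).imp_right fun hi' => ?_
  exact (ge_factor (F.mem i h1 hi) _).mono (by rcases hi' with h | h <;> lia)

/-- An object of the original aisle without maps to `S` lies in the aisle of the simple
forward tilt at `S`. -/
lemma ge_sharp_of_homZero (hfin : FiniteHeart C T) (hS : IsSimpleIn C (heart C T) S)
    (h : heart C T' = simpleSharpSet C T S) {X : C} (hX : T.GE 0 X) (hXS : HomZero X S) :
    T'.GE 0 X := by
  have hP : ∀ E ∈ heart C T, T'.GE (-1) E := fun E hE => by
    refine ge_of_simple_ge hfin (fun s hs => ?_) hE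
    rcases nonempty_iso_or_homZero hs hS with ⟨⟨e⟩⟩ | h'
    · have h1 : S⟦(1 : ℤ)⟧ ∈ heart C T' := h ▸ shift_mem_simpleSharpSet hS.1
      exact ((((TStr.mem_heart_iff _).1 h1).1.shift (-1) (-1) (by lia)).of_iso
        (shiftCancelIso S 1 (-1) (by lia))).of_iso e.symm
    · have h1 : s ∈ heart C T' := h ▸ mem_simpleSharpSet hs.1 h'
      exact ((TStr.mem_heart_iff _).1 h1).1.mono (by lia)
  obtain ⟨A, B, f, g, t, hA, hB, hT⟩ := T.exists_triangle_at 1 X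
  have hS1 := ((TStr.mem_heart_iff S).1 hS.1).2
  have hBS : HomZero B S := HomZero.middle_left (rot_of_distTriang _ hT) hXS
    (((hA.shift 1 2 (by lia)).mono (by lia)).homZero hS1)
  have hB0 : T.GE 0 B := TStr.ge_middle (rot_of_distTriang _ hT) hX
    ((hA.shift 1 2 (by lia)).mono (by lia))
  have hBheart : B ∈ heart C T' :=
    h ▸ mem_simpleSharpSet ((TStr.mem_heart_iff _).2 ⟨hB0, hB⟩) hBS
  exact TStr.ge_middle hT (ge_of_heart_ge hP hA) ((TStr.mem_heart_iff _).1 hBheart).1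

/-- The aisle of the simple backward tilt contains the original aisle. -/
lemma ge_flat_of_ge (hfin : FiniteHeart C T) (hS : IsSimpleIn C (heart C T) S)
    (h : heart C T' = simpleFlatSet C T S) {X : C} (hX : T.GE 0 X) : T'.GE 0 X := by
  refine ge_of_heart_ge (m := 0) (fun E hE => ge_of_simple_ge hfin (fun s hs => ?_) hE) hX
  rcases nonempty_iso_or_homZero hS hs with ⟨⟨e⟩⟩ | h'
  · have h1 : S⟦(-1 : ℤ)⟧ ∈ heart C T' := h ▸ shift_mem_simpleFlatSet hS.1
    exact ((((TStr.mem_heart_iff _).1 h1).1.shift 1 1 (by lia)).of_iso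
      (shiftCancelIso S (-1) 1 (by lia))).mono (by lia) |>.of_iso e
  · have h1 : s ∈ heart C T' := h ▸ mem_simpleFlatSet hs.1 h'
    exact ((TStr.mem_heart_iff _).1 h1).1

/-- The aisle of the simple backward tilt at `S` lies in any shifted aisle containing
the original aisle and `S[-1]`. -/
lemma ge_of_ge_flat {T₀ : TStr C} {m : ℤ} (h : heart C T' = simpleFlatSet C T S)
    (hT : ∀ Y, T.GE 0 Y → T₀.GE m Y) (hS : T₀.GE (m + 1) S) {X : C} (hX : T'.GE 0 X) :
    T₀.GE m X := by
  rw [← add_zero m]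
  refine ge_of_heart_ge (fun E hE => ?_) hX
  rw [h] at hE
  obtain ⟨F⟩ := HeartFiltration.nonempty T E
  refine F.ge_of_factors fun i h1 hi => (hE F i h1 hi).imp_right ?_
  rintro (⟨hd, -⟩ | ⟨hd, hadd⟩)
  · exact hT _ (hd ▸ ge_factor (F.mem i h1 hi) _)
  · exact (ge_of_mem_addObj hS hadd).shift _ _ (by lia)

end Tilt

end Aux

/-- Let `H0`, `H` be finite hearts with `H0[1] ≤ H ≤ H0[N-1]`
(`N ≥ 2`) and `S` a rigid simple of `H`. With homology taken with respect to `H0`: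
(1) `H0[1] ≤ H^♭_S ≤ H0[N-1]` iff `H¹(S) = 0`;
(2) `H0[1] ≤ H^♯_S ≤ H0[N-1]` iff `H^{N-1}(S) = 0`. -/
theorem statement_12 (k : Type*) [Field k] [IsAlgClosed k] [Linear k C]
    [∀ X Y : C, FiniteDimensional k (X ⟶ Y)] [HasFiniteBiproducts C]
    (T0 T : TStr C) (hfin0 : FiniteHeart C T0) (hfin : FiniteHeart C T)
    (N : ℤ) (hN : 2 ≤ N)
    (hint : T.P ⊆ shiftSet C T0.P 1 ∧ shiftSet C T0.P (N - 1) ⊆ T.P)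
    (S : C) (hS : IsSimpleIn C (heart C T) S)
    (hrigid : ∀ f : S ⟶ S⟦(1 : ℤ)⟧, f = 0)
    (Tsharp Tflat : TStr C)
    (hsh : heart C Tsharp = simpleSharpSet C T S)
    (hfl : heart C Tflat = simpleFlatSet C T S) :
    ((Tflat.P ⊆ shiftSet C T0.P 1 ∧ shiftSet C T0.P (N - 1) ⊆ Tflat.P) ↔
      ∀ (F : HeartFiltration C T0 S) (i : ℕ), 1 ≤ i → i ≤ F.n →
        F.deg i = 1 → IsZero (F.factor i)) ∧
    ((Tsharp.P ⊆ shiftSet C T0.P 1 ∧ shiftSet C T0.P (N - 1) ⊆ Tsharp.P) ↔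
      ∀ (F : HeartFiltration C T0 S) (i : ℕ), 1 ≤ i → i ≤ F.n →
        F.deg i = N - 1 → IsZero (F.factor i)) := by
  obtain ⟨hS0, hS1⟩ := (TStr.mem_heart_iff S).1 hS.1
  have hlow : ∀ X, T.GE 0 X → T0.GE 1 X := fun X hX => hint.1 ((TStr.ge_zero_iff X).1 hX)
  have hhigh : ∀ X, T0.GE (N - 1) X → T.GE 0 X := fun X hX =>
    (TStr.ge_zero_iff X).2 (hint.2 hX)
  constructor
  · constructor
    · rintro ⟨h, -⟩ F i h1 hi hd
      have hmem : S⟦(-1 : ℤ)⟧ ∈ heart C Tflat := hfl ▸ shift_mem_simpleFlatSet hS.1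
      have hge : T0.GE 1 (S⟦(-1 : ℤ)⟧) := h hmem.1
      have hge' : T0.GE 2 S :=
        (hge.shift 1 2 (by lia)).of_iso (shiftCancelIso S (-1) 1 (by lia))
      exact F.isZero_factor_of_ge hge' h1 hi (by lia)
    · intro h
      have hS2 : T0.GE (1 + 1) S := by
        obtain ⟨F, hF⟩ := HeartFiltration.exists_of_ge (hlow S hS0)
        refine F.ge_of_factors fun i h1 hi => ?_
        by_cases hd : F.deg i = 1
        · exact Or.inl (h F i h1 hi hd)
        · have := hF i h1 hi
          exact Or.inr ((ge_factor (F.mem i h1 hi) _).mono (by lia))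
      exact ⟨fun X hX => ge_of_ge_flat hfl hlow hS2 ((TStr.ge_zero_iff X).2 hX),
        fun X hX => (TStr.ge_zero_iff X).1 (ge_flat_of_ge hfin hS hfl (hhigh X hX))⟩
  · constructor
    · rintro ⟨-, h⟩ F i h1 hi hd
      have hmem : S⟦(1 : ℤ)⟧ ∈ heart C Tsharp := hsh ▸ shift_mem_simpleSharpSet hS.1
      have hlt : Tsharp.LT 0 S := (((TStr.mem_heart_iff _).1 hmem).2.shift (-1) 0 (by lia)).of_iso
        (shiftCancelIso S 1 (-1) (by lia))
      have hlt' : T0.LT (N - 1) S := TStr.lt_of_homZero fun X hX =>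
        ((TStr.ge_zero_iff X).2 (h hX)).homZero hlt
      exact F.isZero_factor_of_lt hlt' h1 hi hd.ge
    · intro h
      have hSN : T0.LT N S := TStr.lt_of_homZero fun X hX => by
        have hX' : T.GE 0 (X⟦(-1 : ℤ)⟧) := hhigh _ (hX.shift (-1) _ (by lia))
        exact ((hX'.shift 1 1 (by lia)).of_iso
          (shiftCancelIso X (-1) 1 (by lia))).homZero hS1
      have hlt : T0.LT (N - 1) S := by
        obtain ⟨F⟩ := HeartFiltration.nonempty T0 S
        refine F.lt_of_factors fun i h1 hi => ?_
        rcases lt_trichotomy (F.deg i) (N - 1) with hd | hd | hd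
        · exact Or.inr hd
        · exact Or.inl (h F i h1 hi hd)
        · exact Or.inl (F.isZero_factor_of_lt hSN h1 hi (by lia))
      exact ⟨fun X hX => hlow X (ge_of_ge_sharp hsh ((TStr.ge_zero_iff X).2 hX)),
        fun X hX => (TStr.ge_zero_iff X).1
          (ge_sharp_of_homZero hfin hS hsh (hhigh X hX) (TStr.GE.homZero hX hlt))⟩

end Paper
end

section
/- Let k be an algebraically closed field and D a k-linear triangulated category with finite-dimensional Hom spaces. Let H0 and H be finite hearts of bounded t-structures on D with H0[1] ≤ H ≤ H0[N-1] for an integer N ≥ 2, and let S be a rigid simple object of H. Then: (1) the simple backward tilt H^♭_S satisfies H0[1] ≤ H^♭_S ≤ H0[N-1] if and only if Hom(S, T) = 0 for every simple object T of H0[1]; (2) the simple forward tilt H^♯_S satisfies H0[1] ≤ H^♯_S ≤ H0[N-1] if and only if Hom(T, S) = 0 for every simple object T of H0[N-1]. -/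
open CategoryTheory Category Limits Pretriangulated ZeroObject

universe v u

namespace Paper

variable (C : Type u) [Category.{v} C] [HasZeroObject C] [HasShift C ℤ]
  [Preadditive C] [∀ n : ℤ, (shiftFunctor C n).Additive] [Pretriangulated C]

variable {C}

variable (C)

section Helpers

variable {C}

/-- A class of objects which contains the zero objects and is closed under isomorphisms
and extensions. -/
structure ExtClosed (Q : Set C) : Prop where
  zero : ∀ X, IsZero X → X ∈ Q
  iso : ∀ {X Y : C}, (X ≅ Y) → X ∈ Q → Y ∈ Q
  ext : ∀ D ∈ distTriang C, D.obj₁ ∈ Q → D.obj₃ ∈ Q → D.obj₂ ∈ Q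

/-- The left perpendicular of a set of objects. -/
def leftPerp (A : Set C) : Set C := {X | ∀ Y ∈ A, ∀ f : X ⟶ Y, f = 0}

theorem ExtClosed.perp (A : Set C) : ExtClosed (perp C A) where
  zero _ hX _ _ _ := hX.eq_of_tgt _ _
  iso e hX F hF f := by
    rw [← cancel_mono e.inv, zero_comp]
    exact hX F hF _
  ext D hD h₁ h₃ F hF f := by
    obtain ⟨g, rfl⟩ := Triangle.coyoneda_exact₂ D hD f (h₃ F hF _)
    rw [h₁ F hF g, zero_comp]

theorem ExtClosed.leftPerp (A : Set C) : ExtClosed (leftPerp A) where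
  zero _ hX _ _ _ := hX.eq_of_src _ _
  iso e hX F hF f := by
    rw [← cancel_epi e.hom, comp_zero]
    exact hX F hF _
  ext D hD h₁ h₃ F hF f := by
    obtain ⟨g, rfl⟩ := Triangle.yoneda_exact₂ D hD f (h₁ F hF _)
    rw [h₃ F hF g, comp_zero]

/-- The preimage of an extension closed class under a shift is extension closed. -/
theorem ExtClosed.preimageShift {Q : Set C} (hQ : ExtClosed Q) (m : ℤ) :
    ExtClosed {X : C | X⟦m⟧ ∈ Q} where
  zero _ hX := hQ.zero _ ((shiftFunctor C m).map_isZero hX)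
  iso e hX := hQ.iso ((shiftFunctor C m).mapIso e) hX
  ext D hD h₁ h₃ := hQ.ext _ (Triangle.shift_distinguished D hD m) h₁ h₃

theorem ExtClosed.forall_shift {Q : Set C} (hQ : ExtClosed Q) (p : ℤ → Prop) :
    ExtClosed {X : C | ∀ j : ℤ, p j → X⟦j⟧ ∈ Q} where
  zero _ hX j _ := (hQ.preimageShift j).zero _ hX
  iso e hX j hj := (hQ.preimageShift j).iso e (hX j hj)
  ext D hD h₁ h₃ j hj := (hQ.preimageShift j).ext D hD (h₁ j hj) (h₃ j hj)

theorem ExtClosed.inter {Q Q' : Set C} (hQ : ExtClosed Q) (hQ' : ExtClosed Q') :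
    ExtClosed (Q ∩ Q') where
  zero X hX := ⟨hQ.zero X hX, hQ'.zero X hX⟩
  iso e hX := ⟨hQ.iso e hX.1, hQ'.iso e hX.2⟩
  ext D hD h₁ h₃ := ⟨hQ.ext D hD h₁.1 h₃.1, hQ'.ext D hD h₁.2 h₃.2⟩

theorem ExtClosed.shift_shift_mem {Q : Set C} (hQ : ExtClosed Q) {X : C} (a b c : ℤ)
    (h : a + b = c) : X⟦a⟧⟦b⟧ ∈ Q ↔ X⟦c⟧ ∈ Q :=
  ⟨hQ.iso ((shiftFunctorAdd' C a b c h).app X).symm,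
    hQ.iso ((shiftFunctorAdd' C a b c h).app X)⟩

theorem ExtClosed.shift_zero_mem {Q : Set C} (hQ : ExtClosed Q) {X : C} (a : ℤ)
    (h : a = 0) : X⟦a⟧ ∈ Q ↔ X ∈ Q := by
  subst h
  exact ⟨hQ.iso ((shiftFunctorZero C ℤ).app X), hQ.iso ((shiftFunctorZero C ℤ).app X).symm⟩

theorem ExtClosed.addObj_subset [HasFiniteBiproducts C] {Q : Set C} (hQ : ExtClosed Q) {S : C}
    (hS : S ∈ Q) : addObj C S ⊆ Q := by
  rintro M ⟨n, ⟨e⟩⟩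
  let P : ObjectProperty C := fun X => X ∈ Q
  have : P.IsClosedUnderIsomorphisms := ⟨fun e h => hQ.iso e h⟩
  have : P.ContainsZero := ⟨⟨0, isZero_zero C, hQ.zero _ (isZero_zero C)⟩⟩
  have : P.IsClosedUnderBinaryProducts := by
    constructor
    rintro X ⟨p⟩
    refine P.prop_of_iso ?_ (hQ.ext _ (binaryProductTriangle_distinguished _ _)
      (p.prop_diag_obj (.mk .left)) (p.prop_diag_obj (.mk .right)))
    exact IsLimit.conePointUniqueUpToIso (prodIsProd _ _)
      ((IsLimit.postcomposeHomEquiv (diagramIsoPair p.diag) _).2 p.isLimit)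
  have : P.IsClosedUnderFiniteProducts := .mk'
  exact hQ.iso e.symm (P.prop_of_isLimit_fan (biproduct.isLimit fun _ : Fin n => S) fun _ => hS)

theorem hom_shift_eq_zero_iff {X Y : C} (a b : ℤ) (h : a + b = 0) :
    (∀ f : X⟦a⟧ ⟶ Y, f = 0) ↔ ∀ f : X ⟶ Y⟦b⟧, f = 0 := by
  constructor
  · intro H f
    apply (shiftFunctor C a).map_injective
    rw [Functor.map_zero, ← cancel_mono ((shiftFunctorCompIsoId C b a (by omega)).app Y).hom,
      zero_comp]
    exact H _
  · intro H f
    apply (shiftFunctor C b).map_injective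
    rw [Functor.map_zero, ← cancel_epi ((shiftFunctorCompIsoId C a b h).app X).inv, comp_zero]
    exact H _

theorem isZero_of_shift {n : ℤ} {X : C} (h : IsZero (X⟦n⟧)) : IsZero X := by
  rw [IsZero.iff_id_eq_zero]
  exact (shiftFunctor C n).map_injective (h.eq_of_src _ _)

theorem exists_triangle_of_iso {D : Triangle C} (hD : D ∈ distTriang C) {A X B : C}
    (eA : D.obj₁ ≅ A) (eX : D.obj₂ ≅ X) (eB : D.obj₃ ≅ B) :
    ∃ (f : A ⟶ X) (g : X ⟶ B) (h : B ⟶ A⟦(1 : ℤ)⟧), Triangle.mk f g h ∈ distTriang C := by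
  refine ⟨eA.inv ≫ D.mor₁ ≫ eX.hom, eX.inv ≫ D.mor₂ ≫ eB.hom,
    eB.inv ≫ D.mor₃ ≫ (shiftFunctor C (1 : ℤ)).map eA.hom, ?_⟩
  refine isomorphic_distinguished _ hD _
    (Triangle.isoMk _ _ eA.symm eX.symm eB.symm ?_ ?_ ?_)
  · change (eA.inv ≫ D.mor₁ ≫ eX.hom) ≫ eX.inv = eA.inv ≫ D.mor₁
    simp
  · change (eX.inv ≫ D.mor₂ ≫ eB.hom) ≫ eB.inv = eX.inv ≫ D.mor₂
    simp
  · change (eB.inv ≫ D.mor₃ ≫ (shiftFunctor C (1 : ℤ)).map eA.hom) ≫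
      (shiftFunctor C (1 : ℤ)).map eA.inv = eB.inv ≫ D.mor₃
    simp [← Functor.map_comp]

theorem exists_triangle_shift {A B X : C} {f : A ⟶ X} {g : X ⟶ B} {h : B ⟶ A⟦(1 : ℤ)⟧}
    (hD : Triangle.mk f g h ∈ distTriang C) (m : ℤ) {A' X' B' : C}
    (eA : A⟦m⟧ ≅ A') (eX : X⟦m⟧ ≅ X') (eB : B⟦m⟧ ≅ B') :
    ∃ (f' : A' ⟶ X') (g' : X' ⟶ B') (h' : B' ⟶ A'⟦(1 : ℤ)⟧),
      Triangle.mk f' g' h' ∈ distTriang C :=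
  exists_triangle_of_iso (Triangle.shift_distinguished _ hD m) eA eX eB

namespace TStr

variable (T : TStr C)

theorem mem_P_of_hom_zero {X : C} (h : ∀ G ∈ perp C T.P, ∀ f : X ⟶ G, f = 0) : X ∈ T.P := by
  obtain ⟨F, G, f, g, _, hF, hG, hD⟩ := T.exists_triangle X
  obtain ⟨s, hs⟩ := Triangle.coyoneda_exact₂ _ hD (𝟙 X) (h G hG _)
  exact T.summand F X s f hs.symm hF

theorem leftPerp_perp : leftPerp (perp C T.P) = T.P :=
  Set.Subset.antisymm (fun _ h => T.mem_P_of_hom_zero h) fun _ hX _ hG f => hG _ hX f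

theorem extClosed_P : ExtClosed T.P := T.leftPerp_perp ▸ ExtClosed.leftPerp _

theorem perp_shift {Y : C} (hY : Y ∈ perp C T.P) : Y⟦(-1 : ℤ)⟧ ∈ perp C T.P := fun F hF =>
  (hom_shift_eq_zero_iff 1 (-1) (by simp)).1 (hY _ (T.shift_mem F hF))

theorem extClosed_perp : ExtClosed (perp C T.P) := ExtClosed.perp _

theorem extClosed_heart : ExtClosed (heart C T) :=
  T.extClosed_P.inter (T.extClosed_perp.preimageShift (-1))

theorem isZero_of_mem_of_perp {X : C} (h : X ∈ T.P) (h' : X ∈ perp C T.P) : IsZero X :=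
  (IsZero.iff_id_eq_zero X).2 (h' X h _)

theorem P_shift_mono {X : C} {a b : ℤ} (hab : a ≤ b) (h : X⟦a⟧ ∈ T.P) : X⟦b⟧ ∈ T.P := by
  induction b, hab using Int.leInduction with
  | base => exact h
  | succ n _ ih => exact (T.extClosed_P.shift_shift_mem n 1 _ rfl).1 (T.shift_mem _ ih)

theorem perp_shift_anti {X : C} {a b : ℤ} (hab : b ≤ a) (h : X⟦a⟧ ∈ perp C T.P) :
    X⟦b⟧ ∈ perp C T.P := by
  induction b, hab using Int.leInductionDown with
  | base => exact h
  | pred n _ ih => exact (T.extClosed_perp.shift_shift_mem n (-1) _ rfl).1 (T.perp_shift ih)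

theorem P_shift_nonneg {X : C} (h : X ∈ T.P) {a : ℤ} (ha : 0 ≤ a) : X⟦a⟧ ∈ T.P :=
  T.P_shift_mono ha ((T.extClosed_P.shift_zero_mem 0 rfl).2 h)

theorem perp_shift_nonpos {X : C} (h : X ∈ perp C T.P) {a : ℤ} (ha : a ≤ 0) :
    X⟦a⟧ ∈ perp C T.P :=
  T.perp_shift_anti ha ((T.extClosed_perp.shift_zero_mem 0 rfl).2 h)

theorem heart_shift_mem_perp {M : C} (hM : M ∈ heart C T) {a : ℤ} (ha : a ≤ -1) :
    M⟦a⟧ ∈ perp C T.P :=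
  T.perp_shift_anti ha hM.2

/-- If `X[1]` lies in the aisle, the truncation of `X` into the perpendicular lies in the
shifted heart. -/
theorem cone_mem_heart {F X G : C} {f : F ⟶ X} {g : X ⟶ G} {h : G ⟶ F⟦(1 : ℤ)⟧}
    (hD : Triangle.mk f g h ∈ distTriang C) (hF : F ∈ T.P) (hG : G ∈ perp C T.P)
    (hX : X⟦(1 : ℤ)⟧ ∈ T.P) : G⟦(1 : ℤ)⟧ ∈ heart C T := by
  refine ⟨(T.extClosed_P.preimageShift 1).ext _ (rot_of_distTriang _ hD) hX
    (T.shift_mem _ (T.shift_mem _ hF)), ?_⟩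
  rw [T.extClosed_perp.shift_shift_mem 1 (-1) 0 (by simp), T.extClosed_perp.shift_zero_mem 0 rfl]
  exact hG

/-- If `X[-1]` lies in the perpendicular, the truncation of `X` into the aisle lies in the
heart. -/
theorem fiber_mem_heart {F X G : C} {f : F ⟶ X} {g : X ⟶ G} {h : G ⟶ F⟦(1 : ℤ)⟧}
    (hD : Triangle.mk f g h ∈ distTriang C) (hF : F ∈ T.P) (hG : G ∈ perp C T.P)
    (hX : X⟦(-1 : ℤ)⟧ ∈ perp C T.P) : F ∈ heart C T :=
  ⟨hF, (T.extClosed_perp.preimageShift (-1)).ext _ (inv_rot_of_distTriang _ hD)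
    (T.perp_shift (T.perp_shift hG)) hX⟩

/-- An extension closed class which is stable under `[-1]` and contains `H[-1]` contains the
perpendicular of the aisle. -/
theorem perp_subset {Q : Set C} (hQ : ExtClosed Q) (hs : ∀ X ∈ Q, X⟦(-1 : ℤ)⟧ ∈ Q)
    (hH : ∀ X ∈ heart C T, X⟦(-1 : ℤ)⟧ ∈ Q) : perp C T.P ⊆ Q := by
  have key : ∀ (n : ℕ) (Y : C), Y ∈ perp C T.P → Y⟦(n : ℤ)⟧ ∈ T.P → Y ∈ Q := by
    intro n
    induction n with
    | zero =>
      intro Y hY hY'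
      exact hQ.zero _ (T.isZero_of_mem_of_perp
        ((T.extClosed_P.shift_zero_mem _ (by simp)).1 hY') hY)
    | succ n ih =>
      intro Y hY hY'
      obtain ⟨F, G, f, g, h, hF, hG, hD⟩ := T.exists_triangle (Y⟦(1 : ℤ)⟧)
      have hYs : Y⟦(1 : ℤ)⟧⟦(-1 : ℤ)⟧ ∈ perp C T.P := by
        rwa [T.extClosed_perp.shift_shift_mem 1 (-1) 0 (by simp),
          T.extClosed_perp.shift_zero_mem 0 rfl]
      have hFH := T.fiber_mem_heart hD hF hG hYs
      have hG' : G⟦(n : ℤ)⟧ ∈ T.P := by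
        refine (T.extClosed_P.preimageShift n).ext _ (rot_of_distTriang _ hD) ?_ ?_
        · exact (T.extClosed_P.shift_shift_mem 1 n _ (by push_cast; ring)).2 hY'
        · exact T.P_shift_nonneg (T.shift_mem _ hF) (by positivity)
      have := (hQ.preimageShift (-1)).ext _ hD (hH F hFH) (hs _ (ih G hG hG'))
      rwa [← hQ.shift_zero_mem 0 rfl, ← hQ.shift_shift_mem 1 (-1) 0 (by simp)]
  intro Y hY
  obtain ⟨a, ha⟩ := T.bounded_above Y
  exact key a.toNat Y hY (ha _ (Int.self_le_toNat a))

/-- An extension closed class which is stable under `[1]` and contains the heart contains the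
aisle. -/
theorem P_subset {Q : Set C} (hQ : ExtClosed Q) (hs : ∀ X ∈ Q, X⟦(1 : ℤ)⟧ ∈ Q)
    (hH : heart C T ⊆ Q) : T.P ⊆ Q := by
  have key : ∀ (n : ℕ) (X : C), X ∈ T.P → X⟦(-n : ℤ)⟧ ∈ perp C T.P → X ∈ Q := by
    intro n
    induction n with
    | zero =>
      intro X hX hX'
      exact hQ.zero _ (T.isZero_of_mem_of_perp hX
        ((T.extClosed_perp.shift_zero_mem _ (by simp)).1 hX'))
    | succ n ih =>
      intro X hX hX'
      obtain ⟨F, G, f, g, h, hF, hG, hD⟩ := T.exists_triangle (X⟦(-1 : ℤ)⟧)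
      have hXs : X⟦(-1 : ℤ)⟧⟦(1 : ℤ)⟧ ∈ T.P := by
        rwa [T.extClosed_P.shift_shift_mem (-1) 1 0 (by simp),
          T.extClosed_P.shift_zero_mem 0 rfl]
      have hGH := T.cone_mem_heart hD hF hG hXs
      have hF' : F⟦(-n : ℤ)⟧ ∈ perp C T.P := by
        refine (T.extClosed_perp.preimageShift (-n)).ext _ (inv_rot_of_distTriang _ hD) ?_ ?_
        · exact T.perp_shift_nonpos (T.perp_shift hG) (by simp)
        · exact (T.extClosed_perp.shift_shift_mem (-1) (-n) _ (by push_cast; ring)).2 hX'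
      have := (hQ.preimageShift 1).ext _ hD (hs _ (ih F hF hF')) (hH hGH)
      rwa [← hQ.shift_zero_mem 0 rfl, ← hQ.shift_shift_mem (-1) 1 0 (by simp)]
  intro X hX
  obtain ⟨b, hb⟩ := T.bounded_below X
  exact key (-b).toNat X hX (hb _ (by have := Int.self_le_toNat (-b); omega))

end TStr

/-- Extend a filtration by one further factor of smaller degree. -/
theorem HeartFiltration.exists_append {T : TStr C} {X X' A : C} {m : ℤ}
    (F : HeartFiltration C T X') (hdeg : ∀ i, 1 ≤ i → i ≤ F.n → m < F.deg i)
    (hA : A ∈ heart C T) {f : X' ⟶ X} {g : X ⟶ A⟦m⟧} {h : A⟦m⟧ ⟶ X'⟦(1 : ℤ)⟧}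
    (hD : Triangle.mk f g h ∈ distTriang C) :
    ∃ F' : HeartFiltration C T X, ∀ i, 1 ≤ i → i ≤ F'.n → m ≤ F'.deg i := by
  refine ⟨{ n := F.n + 1
            obj := fun i => if i ≤ F.n then F.obj i else X
            deg := fun i => if i ≤ F.n then F.deg i else m
            factor := fun i => if i ≤ F.n then F.factor i else A
            zero := by simpa using F.zero
            top := eqToIso (by simp)
            mem := ?_
            strict := ?_
            tri := ?_ }, ?_⟩
  · intro i hi hi'
    split_ifs with hin
    · exact F.mem i hi hin
    · exact hA
  · intro i j hi hij hj
    rw [if_pos (by omega : i ≤ F.n)]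
    split_ifs with hjn
    · exact F.strict i j hi hij hjn
    · exact hdeg i hi (by omega)
  · intro i hi hi'
    rw [if_pos (by omega : i - 1 ≤ F.n)]
    by_cases hin : i ≤ F.n
    · rw [if_pos hin, if_pos hin, if_pos hin]
      exact F.tri i hi hin
    · rw [if_neg hin, if_neg hin, if_neg hin]
      obtain rfl : i = F.n + 1 := by omega
      exact exists_triangle_of_iso hD F.top.symm (Iso.refl _) (Iso.refl _)
  · intro i hi hi'
    dsimp only at hi' ⊢
    split_ifs with hin
    · exact (hdeg i hi hin).le
    · exact le_rfl

theorem exists_heartFiltration_of_bounds (T : TStr C) (n : ℕ) (m : ℤ) (X : C)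
    (h : X⟦-m⟧ ∈ T.P) (h' : X⟦-m - n⟧ ∈ perp C T.P) :
    ∃ F : HeartFiltration C T X, ∀ i, 1 ≤ i → i ≤ F.n → m ≤ F.deg i := by
  induction n generalizing m X with
  | zero =>
    have hX0 : IsZero (X⟦-m⟧) := T.isZero_of_mem_of_perp h (by simpa using h')
    have hX : IsZero X := isZero_of_shift hX0
    exact ⟨{ n := 0, obj := fun _ => X, deg := fun _ => 0, factor := fun _ => X, zero := hX,
             top := Iso.refl _, mem := by intros; omega, strict := by intros; omega,
             tri := by intros; omega },
           fun i hi hi' => absurd (hi.trans hi') (by simp)⟩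
  | succ n ih =>
    obtain ⟨F, G, f, g, w, hF, hG, hD⟩ := T.exists_triangle (X⟦-m - 1⟧)
    have hGH : G⟦(1 : ℤ)⟧ ∈ heart C T := T.cone_mem_heart hD hF hG
      ((T.extClosed_P.shift_shift_mem _ 1 (-m) (by ring)).2 h)
    have hX' : X⟦-m - 1⟧⟦(-n : ℤ)⟧ ∈ perp C T.P :=
      (T.extClosed_perp.shift_shift_mem _ _ _ (by push_cast; ring)).2 h'
    have hF' : F⟦(-n : ℤ)⟧ ∈ perp C T.P :=
      (T.extClosed_perp.preimageShift (-n)).ext _ (inv_rot_of_distTriang _ hD)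
        (T.perp_shift_nonpos (T.perp_shift hG) (by simp)) hX'
    obtain ⟨Φ, hΦ⟩ := ih (m + 1) (F⟦m + 1⟧)
      ((T.extClosed_P.shift_shift_mem _ _ 0 (by ring)).2
        ((T.extClosed_P.shift_zero_mem 0 rfl).2 hF))
      ((T.extClosed_perp.shift_shift_mem _ _ _ (by ring)).2 hF')
    obtain ⟨f', g', w', hD'⟩ := exists_triangle_shift hD (m + 1) (Iso.refl _)
      ((shiftFunctorCompIsoId C (-m - 1) (m + 1) (by ring)).app X)
      ((shiftFunctorAdd' C 1 m (m + 1) (by ring)).app G)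
    exact Φ.exists_append (fun i hi hi' => by have := hΦ i hi hi'; omega) hGH hD'

theorem nonempty_heartFiltration (T : TStr C) (X : C) : Nonempty (HeartFiltration C T X) := by
  obtain ⟨a, ha⟩ := T.bounded_above X
  obtain ⟨b, hb⟩ := T.bounded_below X
  obtain ⟨F, -⟩ := exists_heartFiltration_of_bounds T (a - b).toNat (-a) X
    (ha _ (by simp)) (hb _ (by have := Int.self_le_toNat (a - b); omega))
  exact ⟨F⟩

theorem ExtClosed.mem_of_heartFiltration {Q : Set C} (hQ : ExtClosed Q) {T : TStr C} {X : C}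
    (F : HeartFiltration C T X)
    (h : ∀ i, 1 ≤ i → i ≤ F.n → (F.factor i)⟦F.deg i⟧ ∈ Q) : X ∈ Q := by
  have key : ∀ i ≤ F.n, F.obj i ∈ Q := by
    intro i
    induction i with
    | zero => exact fun _ => hQ.zero _ F.zero
    | succ i ih =>
      intro hi
      obtain ⟨f, g, w, hD⟩ := F.tri (i + 1) (by omega) hi
      exact hQ.ext _ hD (ih (by omega)) (h (i + 1) (by omega) hi)
  exact hQ.iso F.top (key _ le_rfl)

/-- An object of the backward tilt is an extension of its two homology objects. -/
theorem ExtClosed.mem_of_tiltFlatSet {Q : Set C} (hQ : ExtClosed Q) {T : TStr C}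
    {free tor : Set C} {E : C} (hE : E ∈ tiltFlatSet C T free tor)
    (hfree : ∀ X ∈ heart C T, X ∈ free → X ∈ Q)
    (htor : ∀ X ∈ heart C T, X ∈ tor → X⟦(-1 : ℤ)⟧ ∈ Q) : E ∈ Q := by
  obtain ⟨F⟩ := nonempty_heartFiltration T E
  refine hQ.mem_of_heartFiltration F fun i hi hi' => ?_
  have hm := F.mem i hi hi'
  rcases hE F i hi hi' with h | ⟨h, hmem⟩ | ⟨h, hmem⟩
  · exact hQ.zero _ ((shiftFunctor C _).map_isZero h)
  · exact (hQ.shift_zero_mem _ h).2 (hfree _ hm hmem)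
  · rw [h]
    exact htor _ hm hmem

/-- An object of the forward tilt is an extension of its two homology objects. -/
theorem ExtClosed.mem_of_tiltSharpSet {Q : Set C} (hQ : ExtClosed Q) {T : TStr C}
    {free tor : Set C} {E : C} (hE : E ∈ tiltSharpSet C T free tor)
    (hfree : ∀ X ∈ heart C T, X ∈ free → X⟦(1 : ℤ)⟧ ∈ Q)
    (htor : ∀ X ∈ heart C T, X ∈ tor → X ∈ Q) : E ∈ Q := by
  obtain ⟨F⟩ := nonempty_heartFiltration T E
  refine hQ.mem_of_heartFiltration F fun i hi hi' => ?_
  have hm := F.mem i hi hi'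
  rcases hE F i hi hi' with h | ⟨h, hmem⟩ | ⟨h, hmem⟩
  · exact hQ.zero _ ((shiftFunctor C _).map_isZero h)
  · rw [h]
    exact hfree _ hm hmem
  · exact (hQ.shift_zero_mem _ h).2 (htor _ hm hmem)

theorem FiniteHeart.subset {T : TStr C} (hT : FiniteHeart C T) {Q : Set C} (hQ : ExtClosed Q)
    (h : ∀ s, IsSimpleIn C (heart C T) s → s ∈ Q) : heart C T ⊆ Q := by
  intro M hM
  obtain ⟨m, obj, h0, ⟨e⟩, hobj⟩ := hT.2 M hM
  have key : ∀ i ≤ m, obj i ∈ Q := by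
    intro i
    induction i with
    | zero => exact fun _ => hQ.zero _ h0
    | succ i ih =>
      intro hi
      obtain ⟨s, f, g, w, hs, hD⟩ := hobj i (by omega)
      exact hQ.ext _ hD (ih (by omega)) (h s hs)
  exact hQ.iso e (key m le_rfl)

theorem isSimpleIn_shift {T : TStr C} {s : C} (hs : IsSimpleIn C (heart C T) s) (m : ℤ) :
    IsSimpleIn C (shiftSet C (heart C T) m) (s⟦m⟧) := by
  refine ⟨?_, fun h => hs.2.1 (isZero_of_shift h), ?_⟩
  · exact (T.extClosed_heart.shift_shift_mem _ _ 0 (by simp)).2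
      ((T.extClosed_heart.shift_zero_mem 0 rfl).2 hs.1)
  · intro A B f g w hA hB hD
    obtain ⟨f', g', w', hD'⟩ := exists_triangle_shift hD (-m) (Iso.refl _)
      ((shiftFunctorCompIsoId C m (-m) (by simp)).app s) (Iso.refl _)
    exact (hs.2.2 _ _ f' g' w' hA hB hD').imp isZero_of_shift isZero_of_shift

/-- An object of the aisle without nonzero morphisms to the heart lies in the shifted aisle. -/
theorem TStr.shift_neg_one_mem_P (T : TStr C) {X : C} (hX : X ∈ T.P)
    (h : ∀ M ∈ heart C T, ∀ f : X ⟶ M, f = 0) : X⟦(-1 : ℤ)⟧ ∈ T.P := by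
  obtain ⟨F, G, f, g, w, hF, hG, hD⟩ := T.exists_triangle (X⟦(-1 : ℤ)⟧)
  have hGH := T.cone_mem_heart hD hF hG
    ((T.extClosed_P.shift_shift_mem (-1) 1 0 (by simp)).2
      ((T.extClosed_P.shift_zero_mem 0 rfl).2 hX))
  have hg : g = 0 := (hom_shift_eq_zero_iff (-1) 1 (by simp)).2 (h _ hGH) g
  obtain ⟨s, hs⟩ := Triangle.coyoneda_exact₂ _ hD (𝟙 _) ((id_comp _).trans hg)
  exact T.summand _ _ s f hs.symm hF

/-- If `Y[-1]` is right perpendicular to the aisle and `Y` receives no nonzero morphism from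
the heart, then `Y` is right perpendicular to the aisle. -/
theorem TStr.mem_perp_of_heart (T : TStr C) {Y : C} (hY : Y⟦(-1 : ℤ)⟧ ∈ perp C T.P)
    (h : ∀ M ∈ heart C T, ∀ f : M ⟶ Y, f = 0) : Y ∈ perp C T.P := by
  obtain ⟨F, G, f, g, w, hF, hG, hD⟩ := T.exists_triangle Y
  have hf : f = 0 := h F (T.fiber_mem_heart hD hF hG hY) f
  intro Z hZ k
  obtain ⟨l, rfl⟩ := Triangle.coyoneda_exact₂ _ hD k (hG Z hZ _)
  exact hf ▸ comp_zero

theorem mem_perp_shiftSet_iff (T : TStr C) (m : ℤ) {Y : C} :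
    Y⟦-m⟧ ∈ perp C T.P ↔ Y ∈ perp C (shiftSet C T.P m) := by
  constructor
  · intro h F hF f
    exact (shiftFunctor C (-m)).map_injective (by simpa using h _ hF _)
  · intro h F hF
    refine (hom_shift_eq_zero_iff m (-m) (by simp)).1 (h _ ?_)
    exact (T.extClosed_P.shift_shift_mem _ _ 0 (by simp)).2
      ((T.extClosed_P.shift_zero_mem 0 rfl).2 hF)

section Tilts

variable [HasFiniteBiproducts C] {T T' : TStr C} {S : C}

theorem P_subset_of_simpleFlat (hfl : heart C T' = simpleFlatSet C T S) :
    T.P ⊆ T'.P := by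
  have hsub : perp C T'.P ⊆ perp C T.P := by
    refine T'.perp_subset T.extClosed_perp (fun _ => T.perp_shift) fun E hE => ?_
    rw [hfl] at hE
    exact (T.extClosed_perp.preimageShift (-1)).mem_of_tiltFlatSet hE (fun X hX _ => hX.2)
      fun X hX _ => T.perp_shift hX.2
  exact fun X hX => T'.mem_P_of_hom_zero fun G hG f => hsub hG X hX f

theorem simple_shift_mem_of_simpleFlat (hS : S ∈ heart C T)
    (hfl : heart C T' = simpleFlatSet C T S) : S⟦(-1 : ℤ)⟧ ∈ T'.P := by
  have hp : ExtClosed (perp C {S}) := ExtClosed.perp _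
  have hle : perp C T.P ⊆ perp C {S} := fun Y hY F hF => by
    obtain rfl := Set.mem_singleton_iff.1 hF
    exact hY _ hS.1
  have hsub : perp C T'.P ⊆ {Y : C | ∀ j : ℤ, j ≤ 1 → Y⟦j⟧ ∈ perp C {S}} := by
    refine T'.perp_subset (hp.forall_shift fun j => j ≤ 1) (fun Y hY j hj => ?_) fun E hE => ?_
    · exact (hp.shift_shift_mem _ _ _ rfl).2 (hY _ (by omega))
    rw [hfl] at hE
    refine ((hp.forall_shift fun j => j ≤ 1).preimageShift (-1)).mem_of_tiltFlatSet hE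
      (fun X hX hX' j hj => (hp.shift_shift_mem _ _ _ rfl).2 ?_)
      fun X hX _ j hj => (hp.shift_shift_mem _ _ _ rfl).2 ((hp.shift_shift_mem _ _ _ rfl).2 ?_)
    · rcases hj.eq_or_lt with rfl | hj
      · refine (hp.shift_zero_mem _ (by simp)).2 fun F hF => ?_
        obtain rfl := Set.mem_singleton_iff.1 hF
        exact hX'.2
      · exact hle (T.heart_shift_mem_perp hX (by omega))
    · exact hle (T.heart_shift_mem_perp hX (by omega))
  exact T'.mem_P_of_hom_zero fun G hG =>
    (hom_shift_eq_zero_iff (-1) 1 (by simp)).2 (hsub hG 1 le_rfl S rfl)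

theorem P_subset_of_simpleSharp (hsh : heart C T' = simpleSharpSet C T S) :
    T'.P ⊆ T.P := by
  refine T'.P_subset T.extClosed_P T.shift_mem fun E hE => ?_
  rw [hsh] at hE
  exact T.extClosed_P.mem_of_tiltSharpSet hE (fun X hX _ => T.shift_mem _ hX.1)
    fun X hX _ => hX.1

theorem simple_mem_perp_of_simpleSharp (hS : S ∈ heart C T)
    (hsh : heart C T' = simpleSharpSet C T S) : S ∈ perp C T'.P := by
  have hp : ExtClosed (leftPerp {S}) := ExtClosed.leftPerp _
  have hle : ∀ X ∈ T.P, ∀ j : ℤ, 1 ≤ j → X⟦j⟧ ∈ leftPerp {S} := fun X hX j hj => by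
    rw [← hp.shift_shift_mem (j - 1) 1 j (by ring)]
    intro Y hY
    obtain rfl := Set.mem_singleton_iff.1 hY
    exact (hom_shift_eq_zero_iff 1 (-1) (by simp)).2 (hS.2 _ (T.P_shift_nonneg hX (by omega)))
  have hsub : T'.P ⊆ {X : C | ∀ j : ℤ, 0 ≤ j → X⟦j⟧ ∈ leftPerp {S}} := by
    refine T'.P_subset (hp.forall_shift fun j => 0 ≤ j) (fun Y hY j hj => ?_) fun E hE => ?_
    · exact (hp.shift_shift_mem _ _ _ rfl).2 (hY _ (by omega))
    rw [hsh] at hE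
    refine (hp.forall_shift fun j => 0 ≤ j).mem_of_tiltSharpSet hE
      (fun X hX _ j hj => (hp.shift_shift_mem _ _ _ rfl).2 (hle X hX.1 _ (by omega)))
      fun X hX hX' j hj => ?_
    rcases hj.eq_or_lt with rfl | hj
    · refine (hp.shift_zero_mem _ rfl).2 fun Y hY => ?_
      obtain rfl := Set.mem_singleton_iff.1 hY
      exact hX'.2
    · exact hle X hX.1 j (by omega)
  exact fun X hX => (hp.shift_zero_mem 0 rfl).1 (hsub hX 0 le_rfl) S rfl

theorem simpleFlat_P_subset {T₀ : TStr C} {m : ℤ} (hfl : heart C T' = simpleFlatSet C T S)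
    (hT : T.P ⊆ shiftSet C T₀.P m) (hS : S⟦(-1 : ℤ)⟧ ∈ shiftSet C T₀.P m) :
    T'.P ⊆ shiftSet C T₀.P m := by
  have hQ : ExtClosed (shiftSet C T₀.P m) := T₀.extClosed_P.preimageShift (-m)
  refine T'.P_subset hQ (fun X hX => ?_) fun E hE => ?_
  · exact (T₀.extClosed_P.shift_shift_mem _ _ _ rfl).2 (T₀.P_shift_mono (by omega) hX)
  · rw [hfl] at hE
    exact hQ.mem_of_tiltFlatSet hE (fun X hX _ => hT hX.1)
      fun X _ hX => (hQ.preimageShift (-1)).addObj_subset hS hX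

theorem subset_simpleSharp_P {T₀ : TStr C} {m : ℤ} (hsh : heart C T' = simpleSharpSet C T S)
    (hT : shiftSet C T₀.P m ⊆ T.P) (hS : S ∈ perp C (shiftSet C T₀.P m)) :
    shiftSet C T₀.P m ⊆ T'.P := by
  have hQ : ExtClosed (perp C (shiftSet C T₀.P m)) := ExtClosed.perp _
  have hT' : perp C T.P ⊆ perp C (shiftSet C T₀.P m) := fun Y hY F hF => hY F (hT hF)
  have hsub : perp C T'.P ⊆ perp C (shiftSet C T₀.P m) := by
    refine T'.perp_subset hQ (fun X hX => ?_) fun E hE => ?_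
    · rw [← mem_perp_shiftSet_iff] at hX ⊢
      exact (T₀.extClosed_perp.shift_shift_mem _ _ _ rfl).2
        (T₀.perp_shift_anti (by omega) hX)
    · rw [hsh] at hE
      refine (hQ.preimageShift (-1)).mem_of_tiltSharpSet hE (fun X _ hX => ?_)
        fun X hX _ => hT' hX.2
      exact (hQ.shift_shift_mem 1 (-1) 0 (by simp)).2
        ((hQ.shift_zero_mem 0 rfl).2 (hQ.addObj_subset hS hX))
  exact fun X hX => T'.mem_P_of_hom_zero fun G hG f => hsub hG X hX f

end Tilts

end Helpers

/-- Let `H0`, `H` be finite hearts with `H0[1] ≤ H ≤ H0[N-1]`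
(`N ≥ 2`) and `S` a rigid simple of `H`. Then:
(1) `H0[1] ≤ H^♭_S ≤ H0[N-1]` iff `Hom(S, T') = 0` for every simple `T'` of `H0[1]`;
(2) `H0[1] ≤ H^♯_S ≤ H0[N-1]` iff `Hom(T', S) = 0` for every simple `T'` of `H0[N-1]`. -/
theorem statement_13 (k : Type*) [Field k] [IsAlgClosed k] [Linear k C]
    [∀ X Y : C, FiniteDimensional k (X ⟶ Y)] [HasFiniteBiproducts C]
    (T0 T : TStr C) (hfin0 : FiniteHeart C T0) (hfin : FiniteHeart C T)
    (N : ℤ) (hN : 2 ≤ N)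
    (hint : T.P ⊆ shiftSet C T0.P 1 ∧ shiftSet C T0.P (N - 1) ⊆ T.P)
    (S : C) (hS : IsSimpleIn C (heart C T) S)
    (hrigid : ∀ f : S ⟶ S⟦(1 : ℤ)⟧, f = 0)
    (Tsharp Tflat : TStr C)
    (hsh : heart C Tsharp = simpleSharpSet C T S)
    (hfl : heart C Tflat = simpleFlatSet C T S) :
    ((Tflat.P ⊆ shiftSet C T0.P 1 ∧ shiftSet C T0.P (N - 1) ⊆ Tflat.P) ↔
      ∀ T' : C, IsSimpleIn C (shiftSet C (heart C T0) 1) T' → ∀ f : S ⟶ T', f = 0) ∧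
    ((Tsharp.P ⊆ shiftSet C T0.P 1 ∧ shiftSet C T0.P (N - 1) ⊆ Tsharp.P) ↔
      ∀ T' : C, IsSimpleIn C (shiftSet C (heart C T0) (N - 1)) T' →
        ∀ f : T' ⟶ S, f = 0) := by
  constructor
  · refine ⟨fun h T' hT' f => ?_, fun h => ⟨?_, hint.2.trans (P_subset_of_simpleFlat hfl)⟩⟩
    · have hS' := h.1 (simple_shift_mem_of_simpleFlat hS.1 hfl)
      have hT'' : T'⟦(-1 : ℤ)⟧⟦(-1 : ℤ)⟧ ∈ perp C T0.P := hT'.1.2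
      exact (shiftFunctor C (-1 : ℤ)).map_injective
        ((shiftFunctor C (-1 : ℤ)).map_injective (by simpa using hT'' _ hS' _))
    · refine simpleFlat_P_subset hfl hint.1 (T0.shift_neg_one_mem_P (hint.1 hS.1.1) ?_)
      intro M hM
      refine hfin0.subset (ExtClosed.perp {S⟦(-1 : ℤ)⟧}) (fun s hs F hF => ?_) hM _ rfl
      obtain rfl := Set.mem_singleton_iff.1 hF
      exact (hom_shift_eq_zero_iff (-1) 1 (by simp)).2 (h _ (isSimpleIn_shift hs 1))
  · refine ⟨fun h T' hT' => ?_,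
      fun h => ⟨(P_subset_of_simpleSharp hsh).trans hint.1, ?_⟩⟩
    · exact simple_mem_perp_of_simpleSharp hS.1 hsh T' (h.2 hT'.1.1)
    · refine subset_simpleSharp_P hsh hint.2
        ((mem_perp_shiftSet_iff T0 (N - 1)).1 (T0.mem_perp_of_heart ?_ ?_))
      · rw [T0.extClosed_perp.shift_shift_mem _ _ _ rfl,
          ← T0.extClosed_perp.shift_shift_mem (-1) (-(N - 1)) _ (by ring), mem_perp_shiftSet_iff]
        exact fun F hF => hS.1.2 F (hint.2 hF)
      · intro M hM
        refine hfin0.subset (ExtClosed.leftPerp {S⟦-(N - 1)⟧}) (fun s hs Y hY => ?_) hM _ rfl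
        obtain rfl := Set.mem_singleton_iff.1 hY
        exact (hom_shift_eq_zero_iff (N - 1) _ (by ring)).1 (h _ (isSimpleIn_shift hs (N - 1)))

end Paper
end
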